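/- Weighted Poincaré inequality with power weights (constant exponent case): let Ω ⊂ ℝⁿ be a bounded convex open set, let 1 < p ≤ q < ∞ and a ≤ b be reals with −n/q < a and b < n/p' satisfying 1/p − 1/q ≤ 1/n + (a−b)/n. Then for all f ∈ C^∞(Ω̄), ‖|x|^a (f − ⟨f⟩_Ω)‖_{L^q(Ω)} ≤ C ‖|x|^b ∇f‖_{L^p(Ω)}, with C independent of f. -/

import Mathlib

open MeasureTheory Metric


lemma wp_radial (n : ℕ) (hn : 1 ≤ n) (φ : ℝ → ℝ) (hφ : ∀ r, 0 ≤ r → 0 ≤ φ r)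
    (hi : IntegrableOn (fun y : ℝ => y ^ (n - 1) * φ y) (Set.Ioi 0)) :
    ∫⁻ x : EuclideanSpace ℝ (Fin n), ENNReal.ofReal (φ ‖x‖) =
      ENNReal.ofReal (n * volume.real (ball (0 : EuclideanSpace ℝ (Fin n)) 1) *
        ∫ y in Set.Ioi (0 : ℝ), y ^ (n - 1) * φ y) := by
  have : Nonempty (Fin n) := ⟨⟨0, hn⟩⟩
  have hd : Module.finrank ℝ (EuclideanSpace ℝ (Fin n)) = n := by simp
  have h1 := integral_fun_norm_addHaar (volume : Measure (EuclideanSpace ℝ (Fin n))) φ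
  have h2 := integrable_fun_norm_addHaar (volume : Measure (EuclideanSpace ℝ (Fin n))) (f := φ)
  rw [hd] at h1 h2
  simp only [smul_eq_mul, nsmul_eq_mul] at h1 h2
  rw [← ofReal_integral_eq_lintegral_ofReal (h2.2 hi)
    (Filter.Eventually.of_forall fun x => hφ _ (norm_nonneg x)), h1, mul_assoc]

lemma wp_near (n : ℕ) (hn : 1 ≤ n) (s : ℝ) (hs : -(n : ℝ) < s) :
    ∃ C : ℝ, 0 ≤ C ∧ ∀ (c : EuclideanSpace ℝ (Fin n)) (R : ℝ), 0 < R →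
      ∫⁻ x in {x : EuclideanSpace ℝ (Fin n) | ‖x - c‖ ≤ R}, ENNReal.ofReal (‖x - c‖ ^ s) ≤
        ENNReal.ofReal (C * R ^ (s + n)) := by
  refine ⟨n * volume.real (ball (0 : EuclideanSpace ℝ (Fin n)) 1) * (1 / (s + n)), ?_, ?_⟩
  · have : 0 < s + n := by linarith
    positivity
  intro c R hR
  have e1 : ∀ y ∈ Set.Ioi (0:ℝ), y ^ (n - 1) * (Set.indicator (Set.Iic R) (fun r : ℝ => r ^ s) y)
      = Set.indicator (Set.Iic R) (fun r : ℝ => r ^ (s + n - 1)) y := by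
    intro y hy
    by_cases h : y ≤ R
    · have : y ∈ Set.Iic R := h
      simp only [this, Set.indicator_of_mem]
      rw [← Real.rpow_natCast, ← Real.rpow_add hy]
      congr 1
      push_cast [Nat.cast_sub hn]
      ring
    · have : y ∉ Set.Iic R := h
      simp [this]
  have hi : IntegrableOn (fun r : ℝ => r ^ (s + n - 1)) (Set.Ioc 0 R) := by
    have := (intervalIntegral.intervalIntegrable_rpow' (a := 0) (b := R) (r := s + n - 1)
      (by linarith))
    exact this.1
  have h := wp_radial n hn (Set.indicator (Set.Iic R) (fun r : ℝ => r ^ s))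
    (by intro r hr; by_cases h : r ≤ R <;> simp [h]; positivity) (by
      rw [integrableOn_congr_fun e1 measurableSet_Ioi]
      rw [IntegrableOn, integrable_indicator_iff measurableSet_Iic, IntegrableOn,
        Measure.restrict_restrict measurableSet_Iic, Set.inter_comm, Set.Ioi_inter_Iic]
      exact hi)
  rw [setIntegral_congr_fun measurableSet_Ioi e1, setIntegral_indicator measurableSet_Iic,
    Set.Ioi_inter_Iic, ← intervalIntegral.integral_of_le hR.le, integral_rpow (by left; linarith)] at h
  have h3 : (0:ℝ) ^ (s + n - 1 + 1) = 0 := Real.zero_rpow (by linarith)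
  rw [h3] at h
  rw [← lintegral_indicator (measurableSet_le (by fun_prop) (by fun_prop))]
  have h4 : ∀ x : EuclideanSpace ℝ (Fin n),
     Set.indicator {x : EuclideanSpace ℝ (Fin n) | ‖x - c‖ ≤ R}
      (fun x => ENNReal.ofReal (‖x - c‖ ^ s)) x =
     (fun z : EuclideanSpace ℝ (Fin n) =>
       ENNReal.ofReal (Set.indicator (Set.Iic R) (fun r : ℝ => r ^ s) ‖z‖)) (x - c) := by
    intro x
    by_cases h : ‖x - c‖ ≤ R <;> simp [Set.indicator, h]
  simp_rw [h4]
  rw [lintegral_sub_right_eq_self (fun z : EuclideanSpace ℝ (Fin n) =>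
       ENNReal.ofReal (Set.indicator (Set.Iic R) (fun r : ℝ => r ^ s) ‖z‖)) c, h]
  apply le_of_eq
  congr 1
  rw [sub_zero, show s + n - 1 + 1 = s + n by ring]
  ring

lemma wp_far (n : ℕ) (hn : 1 ≤ n) (s : ℝ) (hs : s < -(n : ℝ)) :
    ∃ C : ℝ, 0 ≤ C ∧ ∀ (c : EuclideanSpace ℝ (Fin n)) (R : ℝ), 0 < R →
      ∫⁻ x in {x : EuclideanSpace ℝ (Fin n) | R ≤ ‖x - c‖}, ENNReal.ofReal (‖x - c‖ ^ s) ≤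
        ENNReal.ofReal (C * R ^ (s + n)) := by
  refine ⟨n * volume.real (ball (0 : EuclideanSpace ℝ (Fin n)) 1) * (1 / (-(s + n))), ?_, ?_⟩
  · have : 0 < -(s + n) := by linarith
    positivity
  intro c R hR
  have e1 : ∀ y ∈ Set.Ioi (0:ℝ), y ^ (n - 1) * (Set.indicator (Set.Ici R) (fun r : ℝ => r ^ s) y)
      = Set.indicator (Set.Ici R) (fun r : ℝ => r ^ (s + n - 1)) y := by
    intro y hy
    by_cases h : R ≤ y
    · have : y ∈ Set.Ici R := h
      simp only [this, Set.indicator_of_mem]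
      rw [← Real.rpow_natCast, ← Real.rpow_add hy]
      congr 1
      push_cast [Nat.cast_sub hn]
      ring
    · have : y ∉ Set.Ici R := h
      simp [this]
  have hi : IntegrableOn (fun r : ℝ => r ^ (s + n - 1)) (Set.Ici R) := by
    rw [integrableOn_Ici_iff_integrableOn_Ioi]
    exact integrableOn_Ioi_rpow_of_lt (by linarith) hR
  have hsub : Set.Ioi (0:ℝ) ∩ Set.Ici R = Set.Ici R :=
    Set.inter_eq_right.2 fun y hy => lt_of_lt_of_le hR hy
  have h := wp_radial n hn (Set.indicator (Set.Ici R) (fun r : ℝ => r ^ s))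
    (by intro r hr; by_cases h : R ≤ r <;> simp [h]; positivity) (by
      rw [integrableOn_congr_fun e1 measurableSet_Ioi]
      rw [IntegrableOn, integrable_indicator_iff measurableSet_Ici, IntegrableOn,
        Measure.restrict_restrict measurableSet_Ici, Set.inter_comm, hsub]
      exact hi)
  rw [setIntegral_congr_fun measurableSet_Ioi e1, setIntegral_indicator measurableSet_Ici,
    hsub, integral_Ici_eq_integral_Ioi, integral_Ioi_rpow_of_lt (by linarith) hR] at h
  rw [← lintegral_indicator (measurableSet_le (by fun_prop) (by fun_prop))]
  have h4 : ∀ x : EuclideanSpace ℝ (Fin n),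
     Set.indicator {x : EuclideanSpace ℝ (Fin n) | R ≤ ‖x - c‖}
      (fun x => ENNReal.ofReal (‖x - c‖ ^ s)) x =
     (fun z : EuclideanSpace ℝ (Fin n) =>
       ENNReal.ofReal (Set.indicator (Set.Ici R) (fun r : ℝ => r ^ s) ‖z‖)) (x - c) := by
    intro x
    by_cases h : R ≤ ‖x - c‖ <;> simp [Set.indicator, h]
  simp_rw [h4]
  rw [lintegral_sub_right_eq_self (fun z : EuclideanSpace ℝ (Fin n) =>
       ENNReal.ofReal (Set.indicator (Set.Ici R) (fun r : ℝ => r ^ s) ‖z‖)) c, h]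
  apply le_of_eq
  congr 1
  rw [show s + n - 1 + 1 = s + n by ring, one_div, inv_neg]
  ring

/-- Measurability of partial integrals over sections. -/
lemma wp_meas {n : ℕ} {S : Set (EuclideanSpace ℝ (Fin n) × EuclideanSpace ℝ (Fin n))}
    (hS : MeasurableSet S) {F : EuclideanSpace ℝ (Fin n) × EuclideanSpace ℝ (Fin n) → ENNReal}
    (hF : Measurable F) :
    Measurable fun x => ∫⁻ y in {y | (x, y) ∈ S}, F (x, y) := by
  have : ∀ x, ∫⁻ y in {y | (x, y) ∈ S}, F (x, y) = ∫⁻ y, S.indicator F (x, y) := by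
    intro x
    rw [← lintegral_indicator (s := {y | (x, y) ∈ S}) (measurable_prodMk_left hS)]
    rfl
  simp_rw [this]
  exact (hF.indicator hS).lintegral_prod_right'

/-- Tonelli over a measurable set. -/
lemma wp_swap {n : ℕ} {S : Set (EuclideanSpace ℝ (Fin n) × EuclideanSpace ℝ (Fin n))}
    (hS : MeasurableSet S) {F : EuclideanSpace ℝ (Fin n) × EuclideanSpace ℝ (Fin n) → ENNReal}
    (hF : Measurable F) :
    ∫⁻ x, ∫⁻ y in {y | (x, y) ∈ S}, F (x, y) = ∫⁻ y, ∫⁻ x in {x | (x, y) ∈ S}, F (x, y) := by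
  have h1 : ∀ x, ∫⁻ y in {y | (x, y) ∈ S}, F (x, y) = ∫⁻ y, S.indicator F (x, y) := by
    intro x
    rw [← lintegral_indicator (s := {y | (x, y) ∈ S}) (measurable_prodMk_left hS)]
    rfl
  have h2 : ∀ y, ∫⁻ x in {x | (x, y) ∈ S}, F (x, y) = ∫⁻ x, S.indicator F (x, y) := by
    intro y
    rw [← lintegral_indicator (s := {x | (x, y) ∈ S}) (measurable_prodMk_right hS)]
    rfl
  simp_rw [h1, h2]
  exact lintegral_lintegral_swap (f := fun x y => S.indicator F (x, y)) (hF.indicator hS).aemeasurable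

lemma wp_term1 {n : ℕ} {S : Set (EuclideanSpace ℝ (Fin n) × EuclideanSpace ℝ (Fin n))}
    {B : EuclideanSpace ℝ (Fin n) × EuclideanSpace ℝ (Fin n) → ℝ}
    {H : EuclideanSpace ℝ (Fin n) → ℝ} {C : ℝ} (hB : Measurable B)
    (hH : ∀ x, 0 ≤ H x) (hH1 : ∫⁻ x, ENNReal.ofReal (H x) ≤ 1)
    (hC : ∀ᵐ x, ∫⁻ y in {y | (x, y) ∈ S}, ENNReal.ofReal (B (x, y)) ≤ ENNReal.ofReal C) :
    ∫⁻ x, ∫⁻ y in {y | (x, y) ∈ S}, ENNReal.ofReal (H x * B (x, y)) ≤ ENNReal.ofReal C := by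
  calc ∫⁻ x, ∫⁻ y in {y | (x, y) ∈ S}, ENNReal.ofReal (H x * B (x, y))
      = ∫⁻ x, ENNReal.ofReal (H x) * ∫⁻ y in {y | (x, y) ∈ S}, ENNReal.ofReal (B (x, y)) := by
        refine lintegral_congr fun x => ?_
        rw [← lintegral_const_mul _ (by fun_prop)]
        simp_rw [ENNReal.ofReal_mul (hH x)]
    _ ≤ ∫⁻ x, ENNReal.ofReal (H x) * ENNReal.ofReal C := by
        refine lintegral_mono_ae ?_
        filter_upwards [hC] with x hx
        gcongr
    _ = (∫⁻ x, ENNReal.ofReal (H x)) * ENNReal.ofReal C :=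
        lintegral_mul_const' _ _ ENNReal.ofReal_ne_top
    _ ≤ 1 * ENNReal.ofReal C := by gcongr
    _ = _ := one_mul _

lemma wp_term2 {n : ℕ} {S : Set (EuclideanSpace ℝ (Fin n) × EuclideanSpace ℝ (Fin n))}
    (hS : MeasurableSet S)
    {B : EuclideanSpace ℝ (Fin n) × EuclideanSpace ℝ (Fin n) → ℝ}
    {H : EuclideanSpace ℝ (Fin n) → ℝ} {C : ℝ} (hB : Measurable B) (hHm : Measurable H)
    (hH : ∀ x, 0 ≤ H x) (hH1 : ∫⁻ x, ENNReal.ofReal (H x) ≤ 1)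
    (hC : ∀ᵐ y, ∫⁻ x in {x | (x, y) ∈ S}, ENNReal.ofReal (B (x, y)) ≤ ENNReal.ofReal C) :
    ∫⁻ x, ∫⁻ y in {y | (x, y) ∈ S}, ENNReal.ofReal (H y * B (x, y)) ≤ ENNReal.ofReal C := by
  rw [wp_swap hS (F := fun z => ENNReal.ofReal (H z.2 * B z)) (by fun_prop)]
  exact wp_term1 (S := Prod.swap ⁻¹' S) (B := fun z => B z.swap) (by fun_prop) hH hH1 hC

lemma wp_ae_ne (n : ℕ) (hn : 1 ≤ n) : ∀ᵐ x : EuclideanSpace ℝ (Fin n), x ≠ 0 := by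
  have : Nonempty (Fin n) := ⟨⟨0, hn⟩⟩
  exact Measure.ae_ne volume 0

/-- Sum of three terms. -/
lemma wp_three {n : ℕ} {S : Set (EuclideanSpace ℝ (Fin n) × EuclideanSpace ℝ (Fin n))}
    (hS : MeasurableSet S)
    {F A B D : EuclideanSpace ℝ (Fin n) × EuclideanSpace ℝ (Fin n) → ℝ}
    (hA : Measurable A) (hB : Measurable B) (_hD : Measurable D) {a b d : ℝ}
    (ha0 : 0 ≤ a) (hb0 : 0 ≤ b) (hd0 : 0 ≤ d)
    (hF : ∀ᵐ x, ∀ᵐ y, (x, y) ∈ S → F (x, y) ≤ A (x, y) + B (x, y) + D (x, y))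
    (ha : ∫⁻ x, ∫⁻ y in {y | (x, y) ∈ S}, ENNReal.ofReal (A (x, y)) ≤ ENNReal.ofReal a)
    (hb : ∫⁻ x, ∫⁻ y in {y | (x, y) ∈ S}, ENNReal.ofReal (B (x, y)) ≤ ENNReal.ofReal b)
    (hd : ∫⁻ x, ∫⁻ y in {y | (x, y) ∈ S}, ENNReal.ofReal (D (x, y)) ≤ ENNReal.ofReal d) :
    ∫⁻ x, ∫⁻ y in {y | (x, y) ∈ S}, ENNReal.ofReal (F (x, y)) ≤ ENNReal.ofReal (a + b + d) := by
  calc ∫⁻ x, ∫⁻ y in {y | (x, y) ∈ S}, ENNReal.ofReal (F (x, y))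
      ≤ ∫⁻ x, ((∫⁻ y in {y | (x, y) ∈ S}, ENNReal.ofReal (A (x, y)))
        + (∫⁻ y in {y | (x, y) ∈ S}, ENNReal.ofReal (B (x, y)))
        + (∫⁻ y in {y | (x, y) ∈ S}, ENNReal.ofReal (D (x, y)))) := by
        refine lintegral_mono_ae ?_
        filter_upwards [hF] with x hx
        rw [← lintegral_add_left (by fun_prop), ← lintegral_add_left (by fun_prop)]
        refine lintegral_mono_ae ?_
        have hm : MeasurableSet {y | (x, y) ∈ S} := measurable_prodMk_left hS
        rw [ae_restrict_iff' hm]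
        filter_upwards [hx] with y hy hyS
        refine (ENNReal.ofReal_le_ofReal (hy hyS)).trans ?_
        refine ENNReal.ofReal_add_le.trans ?_
        gcongr
        exact ENNReal.ofReal_add_le
    _ = _ := by
        rw [lintegral_add_left, lintegral_add_left]
        · exact wp_meas hS (F := fun z => ENNReal.ofReal (A z)) (by fun_prop)
        · exact (wp_meas hS (F := fun z => ENNReal.ofReal (A z)) (by fun_prop)).add
            (wp_meas hS (F := fun z => ENNReal.ofReal (B z)) (by fun_prop))
    _ ≤ ENNReal.ofReal a + ENNReal.ofReal b + ENNReal.ofReal d := by gcongr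
    _ = _ := by
        rw [ENNReal.ofReal_add (by positivity) hd0, ENNReal.ofReal_add ha0 hb0]

lemma wp_hardy (n : ℕ) (hn : 1 ≤ n) (p r β γ : ℝ) (hp : 1 < p) (hr : 1 < r)
    (hpr : 1 ≤ 1 / p + 1 / r) (hβ : β < n * (1 - 1 / p))
    (hγ : γ = β - n * (1 - 1 / p) - n * (1 - 1 / r)) :
    ∃ C : ℝ, 0 ≤ C ∧ ∀ h g : EuclideanSpace ℝ (Fin n) → ℝ, (∀ x, 0 ≤ h x) → (∀ x, 0 ≤ g x) →
      Measurable h → Measurable g → ∫⁻ x, ENNReal.ofReal (h x ^ r) ≤ 1 →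
      ∫⁻ x, ENNReal.ofReal (g x ^ p) ≤ 1 →
      ∫⁻ x, ∫⁻ y in {y | (x, y) ∈ {z : EuclideanSpace ℝ (Fin n) × EuclideanSpace ℝ (Fin n) |
        ‖z.2‖ ≤ ‖z.1‖}}, ENNReal.ofReal (h x * (‖x‖ ^ γ * ‖y‖ ^ (-β)) * g y) ≤
        ENNReal.ofReal C := by
  have hp1 : 0 < 1 - 1 / p := by
    have : 1 / p < 1 := by rw [div_lt_one (by linarith)]; exact hp
    linarith
  have hr1 : 0 < 1 - 1 / r := by
    have : 1 / r < 1 := by rw [div_lt_one (by linarith)]; exact hr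
    linarith
  -- choose s, t
  obtain ⟨s, hs, hst⟩ : ∃ s : ℝ, 0 < s ∧ β + s * (1 - 1 / r) < n * (1 - 1 / p) := by
    refine ⟨(n * (1 - 1 / p) - β) / (2 * (1 - 1 / r)), by apply div_pos <;> linarith, ?_⟩
    have : (n * (1 - 1 / p) - β) / (2 * (1 - 1 / r)) * (1 - 1 / r) = (n * (1 - 1 / p) - β) / 2 := by
      generalize 1 - 1 / r = u at hr1
      field_simp
    rw [this]
    linarith
  set t : ℝ := (β + s * (1 - 1 / r)) / (1 - 1 / p) with ht
  have htn : t < n := by rw [ht, div_lt_iff₀ hp1]; exact hst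
  have htp : t * (1 - 1 / p) = β + s * (1 - 1 / r) := by rw [ht, div_mul_cancel₀ _ hp1.ne']
  obtain ⟨C1, hC1, H1⟩ := wp_near n hn (-t) (by linarith)
  obtain ⟨C2, hC2, H2⟩ := wp_far n hn (-n - s) (by linarith)
  refine ⟨1 + C1 + C2, by positivity, ?_⟩
  intro h g hh hg hhm hgm hh1 hg1
  have hS : MeasurableSet {z : EuclideanSpace ℝ (Fin n) × EuclideanSpace ℝ (Fin n) |
        ‖z.2‖ ≤ ‖z.1‖} := measurableSet_le (by fun_prop) (by fun_prop)
  refine wp_three (F := fun z => h z.1 * (‖z.1‖ ^ γ * ‖z.2‖ ^ (-β)) * g z.2)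
    (A := fun z => h z.1 ^ r * g z.2 ^ p)
    (B := fun z => h z.1 ^ r * (‖z.1‖ ^ (-n + t) * ‖z.2‖ ^ (-t)))
    (D := fun z => g z.2 ^ p * (‖z.1‖ ^ (-n - s) * ‖z.2‖ ^ s)) hS
    (by fun_prop) (by fun_prop) (by fun_prop) zero_le_one hC1 hC2 ?_ ?_ ?_ ?_
  · filter_upwards with x
    filter_upwards [wp_ae_ne n hn] with y hy hxy
    change ‖y‖ ≤ ‖x‖ at hxy
    have hY : 0 < ‖y‖ := norm_pos_iff.2 hy
    have hX : 0 < ‖x‖ := lt_of_lt_of_le hY hxy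
    have hH := hh x
    have hG := hg y
    have am := Real.geom_mean_le_arith_mean3_weighted (w₁ := 1 / p + 1 / r - 1) (w₂ := 1 - 1 / p)
      (w₃ := 1 - 1 / r) (p₁ := h x ^ r * g y ^ p)
      (p₂ := h x ^ r * (‖x‖ ^ (-n + t) * ‖y‖ ^ (-t)))
      (p₃ := g y ^ p * (‖x‖ ^ (-n - s) * ‖y‖ ^ s)) (by linarith) hp1.le hr1.le
      (by positivity) (by positivity) (by positivity) (by ring)
    have hle : ∀ w z : ℝ, w ≤ 1 → 0 ≤ z → w * z ≤ z := fun w z hw hz => by nlinarith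
    have hw1 : 1 / p + 1 / r - 1 ≤ 1 := by linarith
    have hw2 : 1 - 1 / p ≤ 1 := by have : 0 < 1 / p := by positivity
                                   linarith
    have hw3 : 1 - 1 / r ≤ 1 := by have : 0 < 1 / r := by positivity
                                   linarith
    have b1 := hle _ (h x ^ r * g y ^ p) hw1 (by positivity)
    have b2 := hle _ (h x ^ r * (‖x‖ ^ (-n + t) * ‖y‖ ^ (-t))) hw2 (by positivity)
    have b3 := hle _ (g y ^ p * (‖x‖ ^ (-n - s) * ‖y‖ ^ s)) hw3 (by positivity)
    refine le_trans (le_of_eq ?_) (am.trans (by linarith))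
    rcases hH.eq_or_lt with hz | hH
    · rw [← hz, Real.zero_rpow (by linarith)]
      simp only [zero_mul, mul_zero, Real.zero_rpow hp1.ne']
    rcases hG.eq_or_lt with hz | hG
    · rw [← hz, Real.zero_rpow (by linarith)]
      simp only [zero_mul, mul_zero, Real.zero_rpow hr1.ne']
    apply Real.log_injOn_pos
    · exact Set.mem_Ioi.2 (by positivity)
    · exact Set.mem_Ioi.2 (by positivity)
    rw [Real.log_mul (by positivity) (by positivity), Real.log_mul (by positivity) (by positivity),
      Real.log_mul (by positivity) (by positivity), Real.log_mul (by positivity) (by positivity),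
      Real.log_mul (by positivity) (by positivity), Real.log_rpow (by positivity),
      Real.log_rpow (by positivity), Real.log_rpow (by positivity), Real.log_rpow (by positivity),
      Real.log_rpow (by positivity), Real.log_mul (by positivity) (by positivity),
      Real.log_mul (by positivity) (by positivity), Real.log_mul (by positivity) (by positivity),
      Real.log_mul (by positivity) (by positivity), Real.log_mul (by positivity) (by positivity)]
    simp only [Real.log_rpow hX, Real.log_rpow hY, Real.log_rpow hG, Real.log_rpow hH]
    have e1 : r * (1 / r) = 1 := by field_simp
    have e2 : p * (1 / p) = 1 := by field_simp
    rw [hγ]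
    linear_combination (-Real.log (h x)) * e1 - Real.log (g y) * e2 + (Real.log ‖y‖ - Real.log ‖x‖) * htp
  · refine wp_term1 (B := fun z => g z.2 ^ p) (by fun_prop) (fun x => by have := hh x; positivity) hh1 ?_
    filter_upwards with x
    rw [ENNReal.ofReal_one]
    exact (setLIntegral_le_lintegral _ _).trans hg1
  · refine wp_term1 (B := fun z => ‖z.1‖ ^ (-n + t) * ‖z.2‖ ^ (-t)) (by fun_prop)
      (fun x => by have := hh x; positivity) hh1 ?_
    filter_upwards [wp_ae_ne n hn] with x hx
    have hX : 0 < ‖x‖ := norm_pos_iff.2 hx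
    have := H1 0 ‖x‖ hX
    simp only [sub_zero] at this
    simp_rw [ENNReal.ofReal_mul (Real.rpow_nonneg hX.le _)]
    rw [lintegral_const_mul' _ _ ENNReal.ofReal_ne_top]
    refine (mul_le_mul_right this _).trans (le_of_eq ?_)
    rw [← ENNReal.ofReal_mul (by positivity), mul_left_comm, ← Real.rpow_add hX]
    rw [show -(n:ℝ) + t + (-t + n) = 0 by ring, Real.rpow_zero, mul_one]
  · refine wp_term2 hS (B := fun z => ‖z.1‖ ^ (-n - s) * ‖z.2‖ ^ s) (H := fun y => g y ^ p) (by fun_prop)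
      (by fun_prop) (fun x => by have := hg x; positivity) hg1 ?_
    filter_upwards [wp_ae_ne n hn] with x hx
    have hX : 0 < ‖x‖ := norm_pos_iff.2 hx
    have := H2 0 ‖x‖ hX
    simp only [sub_zero] at this
    simp_rw [mul_comm _ (‖x‖ ^ s), ENNReal.ofReal_mul (Real.rpow_nonneg hX.le _)]
    rw [lintegral_const_mul' _ _ ENNReal.ofReal_ne_top]
    refine (mul_le_mul_right this _).trans (le_of_eq ?_)
    rw [← ENNReal.ofReal_mul (by positivity), mul_left_comm, ← Real.rpow_add hX]
    rw [show s + (-(n:ℝ) - s + n) = 0 by ring, Real.rpow_zero, mul_one]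

lemma wp_pot (n : ℕ) (hn : 1 ≤ n) (r θ : ℝ) (hr : 1 < r) (hθ : 0 < θ) (hθr : θ < 1 / r) :
    ∃ C : ℝ, 0 ≤ C ∧ ∀ g : EuclideanSpace ℝ (Fin n) → ℝ, (∀ x, 0 ≤ g x) → Measurable g →
      ∫⁻ x, ENNReal.ofReal (g x ^ r) ≤ 1 → ∀ (M : ℝ) (x : EuclideanSpace ℝ (Fin n)), 0 ≤ M →
      ∫⁻ y in {y | g y ≤ M}, ENNReal.ofReal (‖x - y‖ ^ (n * θ - n) * g y) ≤
        ENNReal.ofReal (C * M ^ (1 - r * θ)) := by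
  have hn0 : (0:ℝ) < n := by exact_mod_cast hn
  have hconj := Real.HolderConjugate.conjExponent hr
  set r' := r.conjExponent with hr'
  have hr'0 : 0 < r' := hconj.symm.pos
  have hrel : r + r' = r * r' := by
    have := hconj.mul_eq_add; linarith
  have hfar : (n * θ - n) * r' < -n := by
    have h1 : 1 / r' = 1 - 1 / r := by
      have := hconj.inv_add_inv_eq_one
      rw [one_div, one_div]; linarith
    have h2 : 1 / r' < 1 - θ := by linarith
    rw [div_lt_iff₀ hr'0] at h2
    nlinarith
  obtain ⟨C1, hC1, H1⟩ := wp_near n hn (n * θ - n) (by nlinarith)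
  obtain ⟨C2, hC2, H2⟩ := wp_far n hn ((n * θ - n) * r') hfar
  refine ⟨C1 + (C2 + 1), by positivity, ?_⟩
  intro g hg hgm hg1 M x hM
  rcases hM.eq_or_lt with hM0 | hM0
  · have : ∫⁻ y in {y | g y ≤ M}, ENNReal.ofReal (‖x - y‖ ^ (n * θ - n) * g y) = 0 := by
      have hm : MeasurableSet {y | g y ≤ M} := measurableSet_le hgm measurable_const
      rw [setLIntegral_congr_fun (g := fun _ => 0) hm]
      · simp
      · intro y hy
        have h0 : g y ≤ M := hy
        have : g y = 0 := le_antisymm (by linarith) (hg y)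
        simp [this]
    rw [this]; exact bot_le
  set R := M ^ (-r / n) with hR
  have hRpos : 0 < R := Real.rpow_pos_of_pos hM0 _
  set lam := M ^ ((1 - r * θ) / r) with hlam
  have hlpos : 0 < lam := Real.rpow_pos_of_pos hM0 _
  have hsub : {y | g y ≤ M} ⊆ ({y | g y ≤ M} ∩ {y | ‖y - x‖ ≤ R}) ∪ {y | R ≤ ‖y - x‖} := by
    intro y hy
    rcases le_total ‖y - x‖ R with h | h
    · left; exact ⟨hy, h⟩
    · right; exact h
  refine (lintegral_mono_set hsub).trans ((lintegral_union_le _ _ _).trans ?_)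
  rw [add_mul, ENNReal.ofReal_add (by positivity) (by positivity)]
  simp_rw [norm_sub_rev x]
  gcongr
  · have hm : MeasurableSet ({y | g y ≤ M} ∩ {y | ‖y - x‖ ≤ R}) :=
      (measurableSet_le hgm measurable_const).inter (measurableSet_le (by fun_prop) (by fun_prop))
    calc ∫⁻ y in ({y | g y ≤ M} ∩ {y | ‖y - x‖ ≤ R}), ENNReal.ofReal (‖y - x‖ ^ (n * θ - n) * g y)
        ≤ ∫⁻ y in ({y | g y ≤ M} ∩ {y | ‖y - x‖ ≤ R}), ENNReal.ofReal (‖y - x‖ ^ (n * θ - n)) * ENNReal.ofReal M := by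
          refine setLIntegral_mono' hm fun y hy => ?_
          rw [← ENNReal.ofReal_mul (by positivity)]
          have : g y ≤ M := hy.1
          gcongr
      _ ≤ ∫⁻ y in {y | ‖y - x‖ ≤ R}, ENNReal.ofReal (‖y - x‖ ^ (n * θ - n)) * ENNReal.ofReal M :=
          lintegral_mono_set Set.inter_subset_right
      _ = (∫⁻ y in {y | ‖y - x‖ ≤ R}, ENNReal.ofReal (‖y - x‖ ^ (n * θ - n))) * ENNReal.ofReal M :=
          lintegral_mul_const' _ _ ENNReal.ofReal_ne_top
      _ ≤ ENNReal.ofReal (C1 * R ^ (n * θ - n + n)) * ENNReal.ofReal M := by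
          gcongr
          exact H1 x R hRpos
      _ = ENNReal.ofReal (C1 * M ^ (1 - r * θ)) := by
          rw [← ENNReal.ofReal_mul (by positivity)]
          congr 1
          rw [mul_assoc, hR, ← Real.rpow_mul hM0.le, ← Real.rpow_add_one hM0.ne']
          congr 2
          field_simp
          ring
  · calc ∫⁻ y in {y | R ≤ ‖y - x‖}, ENNReal.ofReal (‖y - x‖ ^ (n * θ - n) * g y)
        ≤ ∫⁻ y in {y | R ≤ ‖y - x‖}, (ENNReal.ofReal (lam ^ (-r')) * ENNReal.ofReal (‖y - x‖ ^ ((n * θ - n) * r'))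
            + ENNReal.ofReal (lam ^ r) * ENNReal.ofReal (g y ^ r)) := by
          refine lintegral_mono fun y => ?_
          rw [← ENNReal.ofReal_mul (by positivity), ← ENNReal.ofReal_mul (by positivity),
            ← ENNReal.ofReal_add (by positivity) (by have := hg y; positivity)]
          apply ENNReal.ofReal_le_ofReal
          have hgy := hg y
          have y1 := Real.young_inequality_of_nonneg (a := lam * g y) (b := lam⁻¹ * ‖y - x‖ ^ (n * θ - n))
            (by positivity) (by positivity) hconj
          rw [Real.mul_rpow hlpos.le hgy, Real.mul_rpow (by positivity) (by positivity),
            ← Real.rpow_mul (norm_nonneg (y - x)), Real.inv_rpow hlpos.le, ← Real.rpow_neg hlpos.le] at y1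
          have e : lam * g y * (lam⁻¹ * ‖y - x‖ ^ (n * θ - n)) = ‖y - x‖ ^ (n * θ - n) * g y := by
            field_simp
          rw [e] at y1
          have d1 : lam ^ r * g y ^ r / r ≤ lam ^ r * g y ^ r :=
            div_le_self (by positivity) hr.le
          have d2 : lam ^ (-r') * ‖y - x‖ ^ ((n * θ - n) * r') / r' ≤ lam ^ (-r') * ‖y - x‖ ^ ((n * θ - n) * r') :=
            div_le_self (by positivity) hconj.symm.lt.le
          linarith
      _ = ENNReal.ofReal (lam ^ (-r')) * (∫⁻ y in {y | R ≤ ‖y - x‖}, ENNReal.ofReal (‖y - x‖ ^ ((n * θ - n) * r')))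
            + ENNReal.ofReal (lam ^ r) * ∫⁻ y in {y | R ≤ ‖y - x‖}, ENNReal.ofReal (g y ^ r) := by
          rw [lintegral_add_left (by fun_prop), lintegral_const_mul' _ _ ENNReal.ofReal_ne_top,
            lintegral_const_mul' _ _ ENNReal.ofReal_ne_top]
      _ ≤ ENNReal.ofReal (lam ^ (-r')) * ENNReal.ofReal (C2 * R ^ ((n * θ - n) * r' + n))
            + ENNReal.ofReal (lam ^ r) * 1 := by
          gcongr
          · exact H2 x R hRpos
          · exact (setLIntegral_le_lintegral _ _).trans hg1
      _ = ENNReal.ofReal ((C2 + 1) * M ^ (1 - r * θ)) := by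
          rw [mul_one, ← ENNReal.ofReal_mul (by positivity), ← ENNReal.ofReal_add (by positivity) (by positivity)]
          congr 1
          have e1 : lam ^ r = M ^ (1 - r * θ) := by
            rw [hlam, ← Real.rpow_mul hM0.le]
            congr 1
            field_simp
          have e2 : lam ^ (-r') * R ^ ((n * θ - n) * r' + n) = M ^ (1 - r * θ) := by
            rw [hlam, hR, ← Real.rpow_mul hM0.le, ← Real.rpow_mul hM0.le, ← Real.rpow_add hM0]
            congr 1
            field_simp
            linear_combination (r * (θ - 1) - 1) * hrel
          rw [e1, mul_left_comm, e2]
          ring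

lemma wp_hls_half (n : ℕ) (hn : 1 ≤ n) (p r θ : ℝ) (hp : 1 < p) (hr : 1 < r) (hθ : 0 < θ)
    (hpr : 1 / p + 1 / r = 1 + θ) :
    ∃ C : ℝ, 0 ≤ C ∧ ∀ h g : EuclideanSpace ℝ (Fin n) → ℝ, (∀ x, 0 ≤ h x) → (∀ x, 0 ≤ g x) →
      Measurable h → Measurable g → ∫⁻ x, ENNReal.ofReal (h x ^ r) ≤ 1 →
      ∫⁻ x, ENNReal.ofReal (g x ^ p) ≤ 1 →
      ∫⁻ x, ∫⁻ y in {y | g y ≤ h x ^ (r / p)},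
        ENNReal.ofReal (h x * ‖x - y‖ ^ (n * θ - n) * g y) ≤ ENNReal.ofReal C := by
  have hr1 : 1 / r < 1 := by rw [div_lt_one (by linarith)]; exact hr
  obtain ⟨C, hC, H⟩ := wp_pot n hn p θ hp hθ (by linarith)
  refine ⟨C, hC, ?_⟩
  intro h g hh hg hhm hgm hh1 hg1
  calc ∫⁻ x, ∫⁻ y in {y | g y ≤ h x ^ (r / p)},
        ENNReal.ofReal (h x * ‖x - y‖ ^ (n * θ - n) * g y)
      = ∫⁻ x, ENNReal.ofReal (h x) * ∫⁻ y in {y | g y ≤ h x ^ (r / p)},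
        ENNReal.ofReal (‖x - y‖ ^ (n * θ - n) * g y) := by
        refine lintegral_congr fun x => ?_
        rw [← lintegral_const_mul' _ _ ENNReal.ofReal_ne_top]
        simp_rw [mul_assoc, ENNReal.ofReal_mul (hh x)]
    _ ≤ ∫⁻ x, ENNReal.ofReal C * ENNReal.ofReal (h x ^ r) := by
        refine lintegral_mono fun x => ?_
        have hx := hh x
        refine (mul_le_mul_right (H g hg hgm hg1 _ x (by positivity)) _).trans (le_of_eq ?_)
        rw [← ENNReal.ofReal_mul hx, ← ENNReal.ofReal_mul hC]
        congr 1
        rw [mul_left_comm]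
        congr 1
        rcases hx.eq_or_lt with h0 | h0
        · rw [← h0, Real.zero_rpow (by linarith : r ≠ 0), zero_mul]
        · rw [← Real.rpow_mul hx, ← Real.rpow_one_add' hx]
          · congr 1
            have hp0 : p ≠ 0 := by linarith
            have hr0 : r ≠ 0 := by linarith
            field_simp at hpr ⊢
            linear_combination hpr
          · have hp0 : 0 < p := by linarith
            have hr0 : 0 < r := by linarith
            have : 1 + r / p * (1 - p * θ) = r := by
              field_simp at hpr ⊢
              linear_combination hpr
            rw [this]; exact hr0.ne'
    _ = ENNReal.ofReal C * ∫⁻ x, ENNReal.ofReal (h x ^ r) :=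
        lintegral_const_mul' _ _ ENNReal.ofReal_ne_top
    _ ≤ ENNReal.ofReal C * 1 := by gcongr
    _ = _ := mul_one _

lemma wp_hls (n : ℕ) (hn : 1 ≤ n) (p r θ : ℝ) (hp : 1 < p) (hr : 1 < r) (hθ : 0 < θ)
    (hpr : 1 / p + 1 / r = 1 + θ) :
    ∃ C : ℝ, 0 ≤ C ∧ ∀ h g : EuclideanSpace ℝ (Fin n) → ℝ, (∀ x, 0 ≤ h x) → (∀ x, 0 ≤ g x) →
      Measurable h → Measurable g → ∫⁻ x, ENNReal.ofReal (h x ^ r) ≤ 1 →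
      ∫⁻ x, ENNReal.ofReal (g x ^ p) ≤ 1 →
      ∫⁻ x, ∫⁻ y, ENNReal.ofReal (h x * ‖x - y‖ ^ (n * θ - n) * g y) ≤ ENNReal.ofReal C := by
  obtain ⟨C1, hC1, H1⟩ := wp_hls_half n hn p r θ hp hr hθ hpr
  obtain ⟨C2, hC2, H2⟩ := wp_hls_half n hn r p θ hr hp hθ (by linarith)
  refine ⟨C1 + C2, by positivity, ?_⟩
  intro h g hh hg hhm hgm hh1 hg1
  have hp0 : 0 < p := by linarith
  have hr0 : 0 < r := by linarith
  have hS1 : MeasurableSet {z : EuclideanSpace ℝ (Fin n) × EuclideanSpace ℝ (Fin n) |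
      g z.2 ≤ h z.1 ^ (r / p)} := measurableSet_le (by fun_prop) (by fun_prop)
  have hS2 : MeasurableSet {z : EuclideanSpace ℝ (Fin n) × EuclideanSpace ℝ (Fin n) |
      h z.1 ≤ g z.2 ^ (p / r)} := measurableSet_le (by fun_prop) (by fun_prop)
  have hFm : Measurable fun z : EuclideanSpace ℝ (Fin n) × EuclideanSpace ℝ (Fin n) =>
    ENNReal.ofReal (h z.1 * ‖z.1 - z.2‖ ^ (n * θ - n) * g z.2) := by fun_prop
  have hsp : ∀ x, ∫⁻ y, ENNReal.ofReal (h x * ‖x - y‖ ^ (n * θ - n) * g y) ≤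
      (∫⁻ y in {y | g y ≤ h x ^ (r / p)}, ENNReal.ofReal (h x * ‖x - y‖ ^ (n * θ - n) * g y)) +
      ∫⁻ y in {y | h x ≤ g y ^ (p / r)}, ENNReal.ofReal (h x * ‖x - y‖ ^ (n * θ - n) * g y) := by
    intro x
    refine le_trans ?_ (lintegral_union_le _ _ _)
    rw [← setLIntegral_univ]
    apply lintegral_mono_set
    intro y _
    rcases le_total (g y) (h x ^ (r / p)) with h1 | h1
    · left; exact h1
    · right
      change h x ≤ g y ^ (p / r)
      have := Real.rpow_le_rpow (by have := hh x; positivity) h1 (z := p / r) (by positivity)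
      rwa [← Real.rpow_mul (hh x), show r / p * (p / r) = 1 by field_simp, Real.rpow_one] at this
  refine (lintegral_mono hsp).trans ?_
  rw [lintegral_add_left, ENNReal.ofReal_add hC1 hC2]
  · gcongr
    · exact H1 h g hh hg hhm hgm hh1 hg1
    · have := wp_swap hS2 hFm
      refine (le_of_eq this).trans ?_
      refine le_trans (le_of_eq ?_) (H2 g h hg hh hgm hhm hg1 hh1)
      refine lintegral_congr fun y => ?_
      refine lintegral_congr fun x => ?_
      rw [norm_sub_rev]
      congr 1
      ring
  · exact wp_meas hS1 hFm

lemma wp_measS (n : ℕ) : MeasurableSet {z : EuclideanSpace ℝ (Fin n) × EuclideanSpace ℝ (Fin n) |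
        ‖z.1‖ ≤ 2 * ‖z.2‖ ∧ ‖z.2‖ ≤ 2 * ‖z.1‖} := by
  have h1 : MeasurableSet {z : EuclideanSpace ℝ (Fin n) × EuclideanSpace ℝ (Fin n) |
        ‖z.1‖ ≤ 2 * ‖z.2‖} := measurableSet_le (by fun_prop) (by fun_prop)
  have h2 : MeasurableSet {z : EuclideanSpace ℝ (Fin n) × EuclideanSpace ℝ (Fin n) |
        ‖z.2‖ ≤ 2 * ‖z.1‖} := measurableSet_le (by fun_prop) (by fun_prop)
  exact h1.inter h2

lemma wp_mono {n : ℕ} {S S' : Set (EuclideanSpace ℝ (Fin n) × EuclideanSpace ℝ (Fin n))}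
    (hS : MeasurableSet S) (hSS : S ⊆ S')
    {F F' : EuclideanSpace ℝ (Fin n) × EuclideanSpace ℝ (Fin n) → ℝ} {c C : ℝ} (hc : 0 ≤ c)
    (hF : ∀ᵐ x, ∀ᵐ y, (x, y) ∈ S → F (x, y) ≤ c * F' (x, y))
    (h : ∫⁻ x, ∫⁻ y in {y | (x, y) ∈ S'}, ENNReal.ofReal (F' (x, y)) ≤ ENNReal.ofReal C) :
    ∫⁻ x, ∫⁻ y in {y | (x, y) ∈ S}, ENNReal.ofReal (F (x, y)) ≤ ENNReal.ofReal (c * C) := by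
  calc ∫⁻ x, ∫⁻ y in {y | (x, y) ∈ S}, ENNReal.ofReal (F (x, y))
      ≤ ∫⁻ x, ENNReal.ofReal c * ∫⁻ y in {y | (x, y) ∈ S'}, ENNReal.ofReal (F' (x, y)) := by
        refine lintegral_mono_ae ?_
        filter_upwards [hF] with x hx
        have hm : MeasurableSet {y | (x, y) ∈ S} := measurable_prodMk_left hS
        calc ∫⁻ y in {y | (x, y) ∈ S}, ENNReal.ofReal (F (x, y))
            ≤ ∫⁻ y in {y | (x, y) ∈ S}, ENNReal.ofReal c * ENNReal.ofReal (F' (x, y)) := by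
              refine lintegral_mono_ae ?_
              rw [ae_restrict_iff' hm]
              filter_upwards [hx] with y hy hyS
              rw [← ENNReal.ofReal_mul hc]
              exact ENNReal.ofReal_le_ofReal (hy hyS)
          _ = ENNReal.ofReal c * ∫⁻ y in {y | (x, y) ∈ S}, ENNReal.ofReal (F' (x, y)) :=
              lintegral_const_mul' _ _ ENNReal.ofReal_ne_top
          _ ≤ _ := by
              gcongr
    _ = ENNReal.ofReal c * ∫⁻ x, ∫⁻ y in {y | (x, y) ∈ S'}, ENNReal.ofReal (F' (x, y)) :=
        lintegral_const_mul' _ _ ENNReal.ofReal_ne_top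
    _ ≤ ENNReal.ofReal c * ENNReal.ofReal C := by gcongr
    _ = _ := (ENNReal.ofReal_mul hc).symm

lemma wp_union3 {n : ℕ} {S T U : Set (EuclideanSpace ℝ (Fin n) × EuclideanSpace ℝ (Fin n))}
    (hS : MeasurableSet S) (hT : MeasurableSet T) (hSTU : ∀ z, z ∈ S ∨ z ∈ T ∨ z ∈ U)
    {F : EuclideanSpace ℝ (Fin n) × EuclideanSpace ℝ (Fin n) → ℝ} (hF : Measurable F)
    {a b d : ℝ} (ha0 : 0 ≤ a) (hb0 : 0 ≤ b) (hd0 : 0 ≤ d)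
    (ha : ∫⁻ x, ∫⁻ y in {y | (x, y) ∈ S}, ENNReal.ofReal (F (x, y)) ≤ ENNReal.ofReal a)
    (hb : ∫⁻ x, ∫⁻ y in {y | (x, y) ∈ T}, ENNReal.ofReal (F (x, y)) ≤ ENNReal.ofReal b)
    (hd : ∫⁻ x, ∫⁻ y in {y | (x, y) ∈ U}, ENNReal.ofReal (F (x, y)) ≤ ENNReal.ofReal d) :
    ∫⁻ x, ∫⁻ y, ENNReal.ofReal (F (x, y)) ≤ ENNReal.ofReal (a + (b + d)) := by
  calc ∫⁻ x, ∫⁻ y, ENNReal.ofReal (F (x, y))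
      ≤ ∫⁻ x, ((∫⁻ y in {y | (x, y) ∈ S}, ENNReal.ofReal (F (x, y)))
        + ((∫⁻ y in {y | (x, y) ∈ T}, ENNReal.ofReal (F (x, y)))
        + (∫⁻ y in {y | (x, y) ∈ U}, ENNReal.ofReal (F (x, y))))) := by
        refine lintegral_mono fun x => ?_
        have h1 := lintegral_union_le (μ := volume) (fun y => ENNReal.ofReal (F (x, y)))
          {y | (x, y) ∈ T} {y | (x, y) ∈ U}
        have h2 := lintegral_union_le (μ := volume) (fun y => ENNReal.ofReal (F (x, y)))
          {y | (x, y) ∈ S} ({y | (x, y) ∈ T} ∪ {y | (x, y) ∈ U})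
        have h3 : {y | (x, y) ∈ S} ∪ ({y | (x, y) ∈ T} ∪ {y | (x, y) ∈ U}) = Set.univ :=
          Set.eq_univ_of_forall fun y => hSTU (x, y)
        rw [h3, setLIntegral_univ] at h2
        exact h2.trans (by gcongr)
    _ = _ := by
        rw [lintegral_add_left, lintegral_add_left]
        · exact wp_meas hT (F := fun z => ENNReal.ofReal (F z)) (by fun_prop)
        · exact wp_meas hS (F := fun z => ENNReal.ofReal (F z)) (by fun_prop)
    _ ≤ ENNReal.ofReal a + (ENNReal.ofReal b + ENNReal.ofReal d) := by gcongr
    _ = _ := by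
        rw [ENNReal.ofReal_add ha0 (by positivity), ENNReal.ofReal_add hb0 hd0]

lemma wp_comp {X Y : ℝ} (hX : 0 < X) (hY : 0 < Y) (h1 : X ≤ 2 * Y) (h2 : Y ≤ 2 * X) (s : ℝ) :
    Y ^ s ≤ 2 ^ |s| * X ^ s := by
  rcases le_total 0 s with hs | hs
  · rw [abs_of_nonneg hs, ← Real.mul_rpow (by norm_num) hX.le]
    exact Real.rpow_le_rpow hY.le h2 hs
  · have := Real.rpow_le_rpow_of_nonpos (x := X / 2) (y := Y) (by positivity) (by linarith) hs
    rw [Real.div_rpow hX.le (by norm_num)] at this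
    rw [abs_of_nonpos hs, Real.rpow_neg (by norm_num), mul_comm, ← div_eq_mul_inv]
    exact this

/-- The comparable region in the diagonal case. -/
lemma wp_diag (n : ℕ) (hn : 1 ≤ n) (p r : ℝ) (hp : 1 < p) (hr : 1 < r)
    (hpr : 1 / p + 1 / r = 1) :
    ∃ C : ℝ, 0 ≤ C ∧ ∀ h g : EuclideanSpace ℝ (Fin n) → ℝ, (∀ x, 0 ≤ h x) → (∀ x, 0 ≤ g x) →
      Measurable h → Measurable g → ∫⁻ x, ENNReal.ofReal (h x ^ r) ≤ 1 →
      ∫⁻ x, ENNReal.ofReal (g x ^ p) ≤ 1 →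
      ∫⁻ x, ∫⁻ y in {y | (x, y) ∈ {z : EuclideanSpace ℝ (Fin n) × EuclideanSpace ℝ (Fin n) |
        ‖z.1‖ ≤ 2 * ‖z.2‖ ∧ ‖z.2‖ ≤ 2 * ‖z.1‖}},
        ENNReal.ofReal (h x * (‖x‖⁻¹ * ‖x - y‖ ^ (1 - n : ℝ)) * g y) ≤ ENNReal.ofReal C := by
  have hn0 : (0:ℝ) < n := by exact_mod_cast hn
  obtain ⟨C1, hC1, H1⟩ := wp_near n hn (1 - n) (by linarith)
  have hconj : r.HolderConjugate p := by
    rw [Real.holderConjugate_iff]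
    refine ⟨hr, ?_⟩
    rw [← one_div, ← one_div]; linarith
  refine ⟨0 + C1 * 3 + 2 * (C1 * 3), by positivity, ?_⟩
  intro h g hh hg hhm hgm hh1 hg1
  have hS : MeasurableSet {z : EuclideanSpace ℝ (Fin n) × EuclideanSpace ℝ (Fin n) |
        ‖z.1‖ ≤ 2 * ‖z.2‖ ∧ ‖z.2‖ ≤ 2 * ‖z.1‖} :=
    wp_measS n
  have key : ∀ x : EuclideanSpace ℝ (Fin n), x ≠ 0 →
      ∫⁻ y in {y | ‖y - x‖ ≤ 3 * ‖x‖}, ENNReal.ofReal (‖x‖⁻¹ * ‖y - x‖ ^ (1 - n : ℝ))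
        ≤ ENNReal.ofReal (C1 * 3) := by
    intro x hx
    have hX : 0 < ‖x‖ := norm_pos_iff.2 hx
    simp_rw [ENNReal.ofReal_mul (inv_nonneg.2 hX.le)]
    rw [lintegral_const_mul' _ _ ENNReal.ofReal_ne_top]
    refine (mul_le_mul_right (H1 x (3 * ‖x‖) (by positivity)) _).trans (le_of_eq ?_)
    rw [← ENNReal.ofReal_mul (by positivity)]
    congr 1
    rw [show (1 - n + n : ℝ) = 1 by ring, Real.rpow_one]
    field_simp
  refine wp_three (F := fun z => h z.1 * (‖z.1‖⁻¹ * ‖z.1 - z.2‖ ^ (1 - n : ℝ)) * g z.2)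
    (A := fun z => 0)
    (B := fun z => h z.1 ^ r * (‖z.1‖⁻¹ * ‖z.1 - z.2‖ ^ (1 - n : ℝ)))
    (D := fun z => g z.2 ^ p * (‖z.1‖⁻¹ * ‖z.1 - z.2‖ ^ (1 - n : ℝ))) hS
    (by fun_prop) (by fun_prop) (by fun_prop) le_rfl (by positivity) (by positivity) ?_ ?_ ?_ ?_
  · filter_upwards with x
    filter_upwards with y _
    have hhx := hh x
    have hgy := hg y
    have y1 := Real.young_inequality_of_nonneg hhx hgy hconj
    have d1 : h x ^ r / r ≤ h x ^ r := div_le_self (by positivity) hr.le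
    have d2 : g y ^ p / p ≤ g y ^ p := div_le_self (by positivity) hp.le
    have y2 : h x * g y ≤ h x ^ r + g y ^ p := by linarith
    have hK : 0 ≤ ‖x‖⁻¹ * ‖x - y‖ ^ (1 - n : ℝ) := by positivity
    have := mul_le_mul_of_nonneg_right y2 hK
    change h x * (‖x‖⁻¹ * ‖x - y‖ ^ (1 - n : ℝ)) * g y ≤ 0 +
      h x ^ r * (‖x‖⁻¹ * ‖x - y‖ ^ (1 - n : ℝ)) + g y ^ p * (‖x‖⁻¹ * ‖x - y‖ ^ (1 - n : ℝ))
    linarith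
  · simp
  · refine wp_term1 (B := fun z => ‖z.1‖⁻¹ * ‖z.1 - z.2‖ ^ (1 - n : ℝ)) (by fun_prop)
      (fun x => by have := hh x; positivity) hh1 ?_
    filter_upwards [wp_ae_ne n hn] with x hx
    refine le_trans ?_ (key x hx)
    simp_rw [norm_sub_rev x]
    apply lintegral_mono_set
    intro y hy
    have := norm_sub_le y x
    have h2 : ‖y‖ ≤ 2 * ‖x‖ := hy.2
    change ‖y - x‖ ≤ 3 * ‖x‖
    linarith
  · refine wp_term2 hS (B := fun z => ‖z.1‖⁻¹ * ‖z.1 - z.2‖ ^ (1 - n : ℝ)) (H := fun y => g y ^ p)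
      (by fun_prop) (by fun_prop) (fun x => by have := hg x; positivity) hg1 ?_
    filter_upwards [wp_ae_ne n hn] with y hy
    have hY : 0 < ‖y‖ := norm_pos_iff.2 hy
    have hm : MeasurableSet {x : EuclideanSpace ℝ (Fin n) | (x, y) ∈ {z : EuclideanSpace ℝ (Fin n) × EuclideanSpace ℝ (Fin n) |
        ‖z.1‖ ≤ 2 * ‖z.2‖ ∧ ‖z.2‖ ≤ 2 * ‖z.1‖}} := measurable_prodMk_right hS
    calc _ ≤ ∫⁻ x in {x : EuclideanSpace ℝ (Fin n) | (x, y) ∈ {z : EuclideanSpace ℝ (Fin n) × EuclideanSpace ℝ (Fin n) |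
        ‖z.1‖ ≤ 2 * ‖z.2‖ ∧ ‖z.2‖ ≤ 2 * ‖z.1‖}}, ENNReal.ofReal 2 * ENNReal.ofReal (‖y‖⁻¹ * ‖x - y‖ ^ (1 - n : ℝ)) := by
          refine setLIntegral_mono' hm fun x hx => ?_
          have h2 : ‖y‖ ≤ 2 * ‖x‖ := hx.2
          rw [← ENNReal.ofReal_mul (by norm_num), ← mul_assoc]
          have hX : 0 < ‖x‖ := by linarith
          have : ‖x‖⁻¹ ≤ 2 * ‖y‖⁻¹ := by
            field_simp
            linarith
          apply ENNReal.ofReal_le_ofReal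
          change ‖x‖⁻¹ * ‖x - y‖ ^ (1 - n : ℝ) ≤ _
          gcongr
      _ ≤ ∫⁻ x in {x | ‖x - y‖ ≤ 3 * ‖y‖}, ENNReal.ofReal 2 * ENNReal.ofReal (‖y‖⁻¹ * ‖x - y‖ ^ (1 - n : ℝ)) := by
          apply lintegral_mono_set
          intro x hx
          have := norm_sub_le x y
          have h2 : ‖x‖ ≤ 2 * ‖y‖ := hx.1
          change ‖x - y‖ ≤ 3 * ‖y‖
          linarith
      _ = ENNReal.ofReal 2 * ∫⁻ x in {x | ‖x - y‖ ≤ 3 * ‖y‖}, ENNReal.ofReal (‖y‖⁻¹ * ‖x - y‖ ^ (1 - n : ℝ)) :=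
          lintegral_const_mul' _ _ ENNReal.ofReal_ne_top
      _ ≤ ENNReal.ofReal 2 * ENNReal.ofReal (C1 * 3) := by
          gcongr
          exact key y hy
      _ = _ := (ENNReal.ofReal_mul (by norm_num)).symm

lemma wp_stein_weiss (n : ℕ) (hn : 1 ≤ n) (p r a b : ℝ) (hp : 1 < p) (hr : 1 < r)
    (hpr : 1 ≤ 1 / p + 1 / r) (hab : a ≤ b) (hb : b < n * (1 - 1 / p)) (ha : -a < n * (1 - 1 / r))
    (hbal : n * (1 / p + 1 / r - 1) = 1 + a - b) :
    ∃ C : ℝ, 0 ≤ C ∧ ∀ h g : EuclideanSpace ℝ (Fin n) → ℝ, (∀ x, 0 ≤ h x) → (∀ x, 0 ≤ g x) →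
      Measurable h → Measurable g → ∫⁻ x, ENNReal.ofReal (h x ^ r) ≤ 1 →
      ∫⁻ x, ENNReal.ofReal (g x ^ p) ≤ 1 →
      ∫⁻ x, ∫⁻ y, ENNReal.ofReal (h x * (‖x‖ ^ a * ‖x - y‖ ^ (1 - n : ℝ) * ‖y‖ ^ (-b)) * g y) ≤
        ENNReal.ofReal C := by
  have hn0 : (0:ℝ) < n := by exact_mod_cast hn
  have hn1 : (1:ℝ) ≤ n := by exact_mod_cast hn
  set θ := 1 / p + 1 / r - 1 with hθ
  obtain ⟨C1, hC1, H1⟩ := wp_hardy n hn p r b (a + 1 - n) hp hr hpr hb (by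
    linear_combination - hbal + n * hθ)
  obtain ⟨C2, hC2, H2⟩ := wp_hardy n hn r p (-a) (1 - n - b) hr hp (by linarith) ha (by
    linear_combination - hbal + n * hθ)
  have hS1 : MeasurableSet {z : EuclideanSpace ℝ (Fin n) × EuclideanSpace ℝ (Fin n) |
        2 * ‖z.2‖ ≤ ‖z.1‖} := measurableSet_le (by fun_prop) (by fun_prop)
  have hS2 : MeasurableSet {z : EuclideanSpace ℝ (Fin n) × EuclideanSpace ℝ (Fin n) |
        2 * ‖z.1‖ ≤ ‖z.2‖} := measurableSet_le (by fun_prop) (by fun_prop)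
  have hS2' : MeasurableSet {z : EuclideanSpace ℝ (Fin n) × EuclideanSpace ℝ (Fin n) |
        ‖z.1‖ ≤ ‖z.2‖} := measurableSet_le (by fun_prop) (by fun_prop)
  have hS3 : MeasurableSet {z : EuclideanSpace ℝ (Fin n) × EuclideanSpace ℝ (Fin n) |
        ‖z.1‖ ≤ 2 * ‖z.2‖ ∧ ‖z.2‖ ≤ 2 * ‖z.1‖} :=
    wp_measS n
  have hhalf : ∀ x y : EuclideanSpace ℝ (Fin n), x ≠ 0 → 2 * ‖y‖ ≤ ‖x‖ →
      ‖x - y‖ ^ (1 - n : ℝ) ≤ 2 ^ (n - 1 : ℝ) * ‖x‖ ^ (1 - n : ℝ) := by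
    intro x y hx hxy
    have hX : 0 < ‖x‖ := norm_pos_iff.2 hx
    have h1 : ‖x‖ / 2 ≤ ‖x - y‖ := by
      have := norm_sub_norm_le x y
      linarith
    have := Real.rpow_le_rpow_of_nonpos (x := ‖x‖ / 2) (y := ‖x - y‖) (z := (1 - n : ℝ))
      (by positivity) h1 (by linarith)
    refine this.trans (le_of_eq ?_)
    rw [Real.div_rpow hX.le (by norm_num), show (n - 1 : ℝ) = -(1 - n) by ring,
      Real.rpow_neg (by norm_num), div_eq_inv_mul]
  -- the comparable region
  obtain ⟨C3, hC3, H3⟩ : ∃ C : ℝ, 0 ≤ C ∧ ∀ h g : EuclideanSpace ℝ (Fin n) → ℝ,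
      (∀ x, 0 ≤ h x) → (∀ x, 0 ≤ g x) →
      Measurable h → Measurable g → ∫⁻ x, ENNReal.ofReal (h x ^ r) ≤ 1 →
      ∫⁻ x, ENNReal.ofReal (g x ^ p) ≤ 1 →
      ∫⁻ x, ∫⁻ y in {y | (x, y) ∈ {z : EuclideanSpace ℝ (Fin n) × EuclideanSpace ℝ (Fin n) |
        ‖z.1‖ ≤ 2 * ‖z.2‖ ∧ ‖z.2‖ ≤ 2 * ‖z.1‖}},
        ENNReal.ofReal (h x * (‖x‖ ^ a * ‖x - y‖ ^ (1 - n : ℝ) * ‖y‖ ^ (-b)) * g y) ≤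
        ENNReal.ofReal C := by
    have hθ0 : 0 ≤ θ := by linarith
    rcases hθ0.eq_or_lt with h0 | h0
    · obtain ⟨C, hC, H⟩ := wp_diag n hn p r hp hr (by linarith)
      refine ⟨2 ^ |-b| * C, by positivity, ?_⟩
      intro h g hh hg hhm hgm hh1 hg1
      refine wp_mono (F := fun z => h z.1 * (‖z.1‖ ^ a * ‖z.1 - z.2‖ ^ (1 - n : ℝ) * ‖z.2‖ ^ (-b)) * g z.2)
        (F' := fun z => h z.1 * (‖z.1‖⁻¹ * ‖z.1 - z.2‖ ^ (1 - n : ℝ)) * g z.2)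
        hS3 le_rfl (by positivity) ?_ (H h g hh hg hhm hgm hh1 hg1)
      filter_upwards [wp_ae_ne n hn] with x hx
      filter_upwards [wp_ae_ne n hn] with y hy hxy
      have hX : 0 < ‖x‖ := norm_pos_iff.2 hx
      have hY : 0 < ‖y‖ := norm_pos_iff.2 hy
      have hhx := hh x
      have hgy := hg y
      have c1 := wp_comp hX hY hxy.1 hxy.2 (-b)
      have e : ‖x‖ ^ a * ‖x‖ ^ (-b) = ‖x‖⁻¹ := by
        rw [← Real.rpow_add hX, ← Real.rpow_neg_one]
        congr 1
        rw [← h0] at hbal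
        linarith
      change h x * (‖x‖ ^ a * ‖x - y‖ ^ (1 - n : ℝ) * ‖y‖ ^ (-b)) * g y ≤
        2 ^ |-b| * (h x * (‖x‖⁻¹ * ‖x - y‖ ^ (1 - n : ℝ)) * g y)
      calc h x * (‖x‖ ^ a * ‖x - y‖ ^ (1 - n : ℝ) * ‖y‖ ^ (-b)) * g y
          ≤ h x * (‖x‖ ^ a * ‖x - y‖ ^ (1 - n : ℝ) * (2 ^ |-b| * ‖x‖ ^ (-b))) * g y := by gcongr
        _ = 2 ^ |-b| * (h x * ((‖x‖ ^ a * ‖x‖ ^ (-b)) * ‖x - y‖ ^ (1 - n : ℝ)) * g y) := by ring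
        _ = _ := by rw [e]
    · obtain ⟨C, hC, H⟩ := wp_hls n hn p r θ hp hr h0 (by linarith)
      refine ⟨2 ^ |-b| * 3 ^ (b - a) * C, by positivity, ?_⟩
      intro h g hh hg hhm hgm hh1 hg1
      refine wp_mono (S' := Set.univ)
        (F := fun z => h z.1 * (‖z.1‖ ^ a * ‖z.1 - z.2‖ ^ (1 - n : ℝ) * ‖z.2‖ ^ (-b)) * g z.2)
        (F' := fun z => h z.1 * ‖z.1 - z.2‖ ^ (n * θ - n : ℝ) * g z.2)
        hS3 (Set.subset_univ _) (by positivity) ?_ (by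
          simpa using H h g hh hg hhm hgm hh1 hg1)
      filter_upwards [wp_ae_ne n hn] with x hx
      have : Nonempty (Fin n) := ⟨⟨0, hn⟩⟩
      filter_upwards [wp_ae_ne n hn, Measure.ae_ne volume x] with y hy hyx hxy
      have hX : 0 < ‖x‖ := norm_pos_iff.2 hx
      have hY : 0 < ‖y‖ := norm_pos_iff.2 hy
      have hD : 0 < ‖x - y‖ := norm_pos_iff.2 (sub_ne_zero.2 (Ne.symm hyx))
      have hhx := hh x
      have hgy := hg y
      have c1 := wp_comp hX hY hxy.1 hxy.2 (-b)
      have h2 : ‖y‖ ≤ 2 * ‖x‖ := hxy.2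
      have c2 : ‖x‖ ^ (a - b) ≤ 3 ^ (b - a) * ‖x - y‖ ^ (a - b) := by
        have h3 : ‖x - y‖ / 3 ≤ ‖x‖ := by
          have := norm_sub_le x y
          linarith
        have := Real.rpow_le_rpow_of_nonpos (x := ‖x - y‖ / 3) (y := ‖x‖) (z := a - b)
          (by positivity) h3 (by linarith)
        refine this.trans (le_of_eq ?_)
        rw [Real.div_rpow hD.le (by norm_num), show b - a = -(a - b) by ring,
          Real.rpow_neg (by norm_num), div_eq_inv_mul]
      have e : ‖x‖ ^ a * ‖x‖ ^ (-b) = ‖x‖ ^ (a - b) := by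
        rw [← Real.rpow_add hX]; rfl
      have e2 : ‖x - y‖ ^ (a - b) * ‖x - y‖ ^ (1 - n : ℝ) = ‖x - y‖ ^ (n * θ - n : ℝ) := by
        rw [← Real.rpow_add hD]
        congr 1
        linarith
      change h x * (‖x‖ ^ a * ‖x - y‖ ^ (1 - n : ℝ) * ‖y‖ ^ (-b)) * g y ≤
        2 ^ |-b| * 3 ^ (b - a) * (h x * ‖x - y‖ ^ (n * θ - n : ℝ) * g y)
      calc h x * (‖x‖ ^ a * ‖x - y‖ ^ (1 - n : ℝ) * ‖y‖ ^ (-b)) * g y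
          ≤ h x * (‖x‖ ^ a * ‖x - y‖ ^ (1 - n : ℝ) * (2 ^ |-b| * ‖x‖ ^ (-b))) * g y := by gcongr
        _ = 2 ^ |-b| * (h x * ((‖x‖ ^ a * ‖x‖ ^ (-b)) * ‖x - y‖ ^ (1 - n : ℝ)) * g y) := by ring
        _ ≤ 2 ^ |-b| * (h x * ((3 ^ (b - a) * ‖x - y‖ ^ (a - b)) * ‖x - y‖ ^ (1 - n : ℝ)) * g y) := by
            rw [e]; gcongr
        _ = 2 ^ |-b| * 3 ^ (b - a) * (h x * (‖x - y‖ ^ (a - b) * ‖x - y‖ ^ (1 - n : ℝ)) * g y) := by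
            ring
        _ = _ := by rw [e2]
  refine ⟨2 ^ (n - 1 : ℝ) * C1 + (2 ^ (n - 1 : ℝ) * C2 + C3), by positivity, ?_⟩
  intro h g hh hg hhm hgm hh1 hg1
  refine wp_union3 (F := fun z => h z.1 * (‖z.1‖ ^ a * ‖z.1 - z.2‖ ^ (1 - n : ℝ) * ‖z.2‖ ^ (-b)) * g z.2)
    hS1 hS2 (U := {z | ‖z.1‖ ≤ 2 * ‖z.2‖ ∧ ‖z.2‖ ≤ 2 * ‖z.1‖}) ?_ (by fun_prop)
    (by positivity) (by positivity) hC3 ?_ ?_ (H3 h g hh hg hhm hgm hh1 hg1)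
  · intro z
    rcases le_total (2 * ‖z.2‖) ‖z.1‖ with h1 | h1
    · left; exact h1
    rcases le_total (2 * ‖z.1‖) ‖z.2‖ with h2 | h2
    · right; left; exact h2
    · right; right; exact ⟨h1, h2⟩
  · refine wp_mono (c := 2 ^ (n - 1 : ℝ)) (F := fun z => h z.1 * (‖z.1‖ ^ a * ‖z.1 - z.2‖ ^ (1 - n : ℝ) * ‖z.2‖ ^ (-b)) * g z.2)
      (F' := fun z => h z.1 * (‖z.1‖ ^ (a + 1 - n) * ‖z.2‖ ^ (-b)) * g z.2)
      hS1 ?_ (by positivity) ?_ (H1 h g hh hg hhm hgm hh1 hg1)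
    · intro z hz
      have h1 : 2 * ‖z.2‖ ≤ ‖z.1‖ := hz
      change ‖z.2‖ ≤ ‖z.1‖
      have := norm_nonneg z.2
      linarith
    · filter_upwards [wp_ae_ne n hn] with x hx
      filter_upwards with y hxy
      have hX : 0 < ‖x‖ := norm_pos_iff.2 hx
      have hhx := hh x
      have hgy := hg y
      have c := hhalf x y hx hxy
      have e : ‖x‖ ^ a * ‖x‖ ^ (1 - n : ℝ) = ‖x‖ ^ (a + 1 - n) := by
        rw [← Real.rpow_add hX]; congr 1; ring
      change h x * (‖x‖ ^ a * ‖x - y‖ ^ (1 - n : ℝ) * ‖y‖ ^ (-b)) * g y ≤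
        2 ^ (n - 1 : ℝ) * (h x * (‖x‖ ^ (a + 1 - n) * ‖y‖ ^ (-b)) * g y)
      calc h x * (‖x‖ ^ a * ‖x - y‖ ^ (1 - n : ℝ) * ‖y‖ ^ (-b)) * g y
          ≤ h x * (‖x‖ ^ a * (2 ^ (n - 1 : ℝ) * ‖x‖ ^ (1 - n : ℝ)) * ‖y‖ ^ (-b)) * g y := by gcongr
        _ = 2 ^ (n - 1 : ℝ) * (h x * ((‖x‖ ^ a * ‖x‖ ^ (1 - n : ℝ)) * ‖y‖ ^ (-b)) * g y) := by ring
        _ = _ := by rw [e]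
  · have H2' := H2 g h hg hh hgm hhm hg1 hh1
    have H2'' : ∫⁻ x, ∫⁻ y in {y | (x, y) ∈ {z : EuclideanSpace ℝ (Fin n) × EuclideanSpace ℝ (Fin n) |
        ‖z.1‖ ≤ ‖z.2‖}}, ENNReal.ofReal ((fun z : EuclideanSpace ℝ (Fin n) × EuclideanSpace ℝ (Fin n) =>
          g z.2 * (‖z.2‖ ^ (1 - n - b) * ‖z.1‖ ^ (- -a)) * h z.1) (x, y)) ≤ ENNReal.ofReal C2 := by
      rw [wp_swap hS2' (F := fun z => ENNReal.ofReal (g z.2 * (‖z.2‖ ^ (1 - n - b) * ‖z.1‖ ^ (- -a)) * h z.1))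
        (by fun_prop)]
      exact H2'
    refine wp_mono (S' := {z | ‖z.1‖ ≤ ‖z.2‖}) (c := 2 ^ (n - 1 : ℝ)) (F := fun z => h z.1 * (‖z.1‖ ^ a * ‖z.1 - z.2‖ ^ (1 - n : ℝ) * ‖z.2‖ ^ (-b)) * g z.2)
      (F' := fun z => g z.2 * (‖z.2‖ ^ (1 - n - b) * ‖z.1‖ ^ (- -a)) * h z.1) hS2 ?_ (by positivity) ?_ H2''
    · intro z hz
      have h1 : 2 * ‖z.1‖ ≤ ‖z.2‖ := hz
      change ‖z.1‖ ≤ ‖z.2‖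
      have := norm_nonneg z.1
      linarith
    · filter_upwards with x
      filter_upwards [wp_ae_ne n hn] with y hy hxy
      have hY : 0 < ‖y‖ := norm_pos_iff.2 hy
      have hhx := hh x
      have hgy := hg y
      have c := hhalf y x hy hxy
      rw [norm_sub_rev] at c
      have e : ‖y‖ ^ (-b) * ‖y‖ ^ (1 - n : ℝ) = ‖y‖ ^ (1 - n - b) := by
        rw [← Real.rpow_add hY]; congr 1; ring
      change h x * (‖x‖ ^ a * ‖x - y‖ ^ (1 - n : ℝ) * ‖y‖ ^ (-b)) * g y ≤
        2 ^ (n - 1 : ℝ) * (g y * (‖y‖ ^ (1 - n - b) * ‖x‖ ^ (- -a)) * h x)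
      calc h x * (‖x‖ ^ a * ‖x - y‖ ^ (1 - n : ℝ) * ‖y‖ ^ (-b)) * g y
          ≤ h x * (‖x‖ ^ a * (2 ^ (n - 1 : ℝ) * ‖y‖ ^ (1 - n : ℝ)) * ‖y‖ ^ (-b)) * g y := by gcongr
        _ = 2 ^ (n - 1 : ℝ) * (g y * ((‖y‖ ^ (-b) * ‖y‖ ^ (1 - n : ℝ)) * ‖x‖ ^ a) * h x) := by ring
        _ = _ := by rw [e, neg_neg]

lemma wp_repr_t (n : ℕ) (hn : 1 ≤ n) (D : ℝ) (hD : 0 < D) (u : EuclideanSpace ℝ (Fin n))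
    (hu : u ≠ 0) :
    ∫⁻ t in {t : ℝ | 0 < t ∧ t ≤ 1}, ENNReal.ofReal (t ^ n)⁻¹ *
      {v : EuclideanSpace ℝ (Fin n) | ‖v‖ ≤ D}.indicator (fun v => ENNReal.ofReal ‖v‖) (t⁻¹ • u)
      ≤ ENNReal.ofReal (D ^ n / n) * ENNReal.ofReal (‖u‖ ^ (1 - n : ℝ)) := by
  have hn0 : (0:ℝ) < n := by exact_mod_cast hn
  have hU : 0 < ‖u‖ := norm_pos_iff.2 hu
  have hm : MeasurableSet {t : ℝ | 0 < t ∧ t ≤ 1} := measurableSet_Ioc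
  have hc : 0 < ‖u‖ / D / 2 := by positivity
  have hi := integrableOn_Ioi_rpow_of_lt (a := (-n - 1 : ℝ)) (by linarith) (c := ‖u‖ / D) (by positivity)
  have hv := integral_Ioi_rpow_of_lt (a := (-n - 1 : ℝ)) (by linarith) (c := ‖u‖ / D) (by positivity)
  calc _ ≤ ∫⁻ t in {t : ℝ | 0 < t ∧ t ≤ 1}, (Set.Ici (‖u‖ / D)).indicator
          (fun t => ENNReal.ofReal (‖u‖ * t ^ (-n - 1 : ℝ))) t := by
        refine setLIntegral_mono' hm fun t ht => ?_
        have ht0 : 0 < t := ht.1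
        by_cases h : ‖t⁻¹ • u‖ ≤ D
        · have h' := h
          rw [norm_smul, Real.norm_of_nonneg (by positivity)] at h'
          have h2 : ‖u‖ / D ≤ t := by
            rw [div_le_iff₀ hD]
            rw [inv_mul_le_iff₀ ht0] at h'
            exact h'
          rw [Set.indicator_of_mem (by exact h), Set.indicator_of_mem (by exact h2),
            ← ENNReal.ofReal_mul (by positivity)]
          apply ENNReal.ofReal_le_ofReal
          rw [norm_smul, Real.norm_of_nonneg (by positivity), Real.rpow_sub ht0, Real.rpow_neg ht0.le,
            Real.rpow_one, Real.rpow_natCast]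
          apply le_of_eq
          field_simp
        · rw [Set.indicator_of_notMem (by exact h)]
          simp
    _ ≤ ∫⁻ t, (Set.Ici (‖u‖ / D)).indicator
          (fun t => ENNReal.ofReal (‖u‖ * t ^ (-n - 1 : ℝ))) t := setLIntegral_le_lintegral _ _
    _ = ∫⁻ t in Set.Ioi (‖u‖ / D), ENNReal.ofReal (‖u‖ * t ^ (-n - 1 : ℝ)) := by
        rw [lintegral_indicator measurableSet_Ici, setLIntegral_congr Ioi_ae_eq_Ici]
    _ = ENNReal.ofReal (∫ t in Set.Ioi (‖u‖ / D), (‖u‖ * t ^ (-n - 1 : ℝ))) := by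
        rw [ofReal_integral_eq_lintegral_ofReal (hi.const_mul _)]
        rw [Filter.EventuallyLE, ae_restrict_iff' measurableSet_Ioi]
        filter_upwards with t ht
        have : 0 < t := lt_trans (by positivity) ht
        change 0 ≤ ‖u‖ * t ^ (-n - 1 : ℝ)
        positivity
    _ = _ := by
        rw [← ENNReal.ofReal_mul (by positivity), integral_const_mul, hv]
        congr 1
        rw [show (-n - 1 + 1 : ℝ) = -n by ring, Real.rpow_neg (by positivity),
          Real.rpow_natCast, Real.rpow_sub hU, Real.rpow_one, Real.rpow_natCast, div_pow]
        field_simp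

lemma wp_repr_core (n : ℕ) (hn : 1 ≤ n) (D : ℝ) (hD : 0 < D)
    (w : EuclideanSpace ℝ (Fin n) → ENNReal) (hw : Measurable w) (x : EuclideanSpace ℝ (Fin n)) :
    ∫⁻ y in {y | ‖y - x‖ ≤ D}, ∫⁻ t in {t : ℝ | 0 < t ∧ t ≤ 1},
        w (x + t • (y - x)) * ENNReal.ofReal ‖y - x‖ ≤
      ENNReal.ofReal (D ^ n / n) * ∫⁻ z, w z * ENNReal.ofReal (‖x - z‖ ^ (1 - n : ℝ)) := by
  have hm : MeasurableSet {t : ℝ | 0 < t ∧ t ≤ 1} := measurableSet_Ioc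
  set k : EuclideanSpace ℝ (Fin n) → ENNReal :=
    {v : EuclideanSpace ℝ (Fin n) | ‖v‖ ≤ D}.indicator (fun v => ENNReal.ofReal ‖v‖) with hk
  have hkm : Measurable k := Measurable.indicator (by fun_prop)
    (measurableSet_le (by fun_prop) (by fun_prop))
  have hB : MeasurableSet {y | ‖y - x‖ ≤ D} := measurableSet_le (by fun_prop) (by fun_prop)
  have hinner : ∀ t : ℝ, 0 < t → ∫⁻ y, w (x + t • (y - x)) * k (y - x) =
      ∫⁻ u, w (x + u) * (ENNReal.ofReal (t ^ n)⁻¹ * k (t⁻¹ • u)) := by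
    intro t ht
    rw [lintegral_sub_right_eq_self (fun v => w (x + t • v) * k v) x]
    have h1 := Measure.map_addHaar_smul (volume : Measure (EuclideanSpace ℝ (Fin n))) ht.ne'
    have h2 := lintegral_map (μ := (volume : Measure (EuclideanSpace ℝ (Fin n))))
      (f := fun u => w (x + u) * k (t⁻¹ • u)) (g := fun v => t • v)
      (by fun_prop) (by fun_prop)
    have h3 : ∀ v : EuclideanSpace ℝ (Fin n), t⁻¹ • t • v = v := fun v => inv_smul_smul₀ ht.ne' v
    simp only [h3] at h2
    rw [← h2]
    change ∫⁻ u, _ ∂(Measure.map (fun v => t • v) volume) = _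
    rw [h1, lintegral_smul_measure, smul_eq_mul, ← lintegral_const_mul' _ _ ENNReal.ofReal_ne_top]
    refine lintegral_congr fun u => ?_
    rw [finrank_euclideanSpace_fin, abs_of_pos (by positivity)]
    ring
  calc _ ≤ ∫⁻ y, ∫⁻ t in {t : ℝ | 0 < t ∧ t ≤ 1}, w (x + t • (y - x)) * k (y - x) := by
        rw [← lintegral_indicator hB]
        refine lintegral_mono fun y => ?_
        by_cases h : ‖y - x‖ ≤ D
        · rw [Set.indicator_of_mem (by exact h), hk, Set.indicator_of_mem (by exact h)]
        · rw [Set.indicator_of_notMem (by exact h)]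
          exact bot_le
    _ = ∫⁻ t in {t : ℝ | 0 < t ∧ t ≤ 1}, ∫⁻ y, w (x + t • (y - x)) * k (y - x) := by
        rw [lintegral_lintegral_swap]
        apply Measurable.aemeasurable
        unfold Function.uncurry
        fun_prop
    _ = ∫⁻ t in {t : ℝ | 0 < t ∧ t ≤ 1}, ∫⁻ u, w (x + u) * (ENNReal.ofReal (t ^ n)⁻¹ * k (t⁻¹ • u)) :=
        setLIntegral_congr_fun hm fun t ht => hinner t ht.1
    _ = ∫⁻ u, ∫⁻ t in {t : ℝ | 0 < t ∧ t ≤ 1}, w (x + u) * (ENNReal.ofReal (t ^ n)⁻¹ * k (t⁻¹ • u)) := by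
        rw [lintegral_lintegral_swap]
        apply Measurable.aemeasurable
        unfold Function.uncurry
        fun_prop
    _ = ∫⁻ u, w (x + u) * ∫⁻ t in {t : ℝ | 0 < t ∧ t ≤ 1}, (ENNReal.ofReal (t ^ n)⁻¹ * k (t⁻¹ • u)) := by
        refine lintegral_congr fun u => ?_
        rw [lintegral_const_mul _ (by fun_prop)]
    _ ≤ ∫⁻ u, w (x + u) * (ENNReal.ofReal (D ^ n / n) * ENNReal.ofReal (‖u‖ ^ (1 - n : ℝ))) := by
        refine lintegral_mono_ae ?_
        filter_upwards [wp_ae_ne n hn] with u hu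
        gcongr
        exact wp_repr_t n hn D hD u hu
    _ = ENNReal.ofReal (D ^ n / n) * ∫⁻ u, w (x + u) * ENNReal.ofReal (‖u‖ ^ (1 - n : ℝ)) := by
        rw [← lintegral_const_mul' _ _ ENNReal.ofReal_ne_top]
        refine lintegral_congr fun u => ?_
        ring
    _ = _ := by
        congr 1
        rw [← lintegral_add_left_eq_self (fun z => w z * ENNReal.ofReal (‖x - z‖ ^ (1 - n : ℝ))) x]
        simp

lemma wp_path {n : ℕ} {Ω : Set (EuclideanSpace ℝ (Fin n))} (hΩo : IsOpen Ω) (hΩc : Convex ℝ Ω)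
    {f : EuclideanSpace ℝ (Fin n) → ℝ} (hf : ContDiffOn ℝ 1 f (closure Ω))
    {x y : EuclideanSpace ℝ (Fin n)} (hx : x ∈ Ω) (hy : y ∈ Ω) :
    ‖f x - f y‖ₑ ≤ ∫⁻ t in {t : ℝ | 0 < t ∧ t ≤ 1},
      Ω.indicator (fun z => ENNReal.ofReal ‖fderivWithin ℝ f (closure Ω) z‖) (x + t • (y - x)) *
        ENNReal.ofReal ‖y - x‖ := by
  have hγ : ∀ t ∈ Set.Icc (0:ℝ) 1, x + t • (y - x) ∈ Ω := by
    intro t ht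
    exact hΩc.add_smul_sub_mem hx hy ht
  have hcd : ContDiffOn ℝ 1 (fun t : ℝ => f (x + t • (y - x))) (Set.Icc 0 1) := by
    refine ContDiffOn.comp (hf.mono subset_closure) ?_ hγ
    exact ContDiff.contDiffOn (by fun_prop)
  have h1 := enorm_sub_le_lintegral_deriv_of_contDiffOn_Icc hcd zero_le_one
  simp only [one_smul, zero_smul, add_zero, add_sub_cancel] at h1
  rw [enorm_sub_rev]
  refine h1.trans ?_
  rw [setLIntegral_congr Ioc_ae_eq_Icc.symm]
  refine setLIntegral_mono' measurableSet_Ioc fun t ht => ?_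
  have hz := hγ t ⟨ht.1.le, ht.2⟩
  rw [Set.indicator_of_mem hz]
  have hnh : closure Ω ∈ nhds (x + t • (y - x)) :=
    Filter.mem_of_superset (hΩo.mem_nhds hz) subset_closure
  have hd : DifferentiableAt ℝ f (x + t • (y - x)) :=
    (hf.differentiableOn one_ne_zero).differentiableAt hnh
  rw [fderivWithin_of_mem_nhds hnh]
  have hg : HasDerivAt (fun t : ℝ => x + t • (y - x)) (y - x) t := by
    simpa using ((hasDerivAt_id t).smul_const (y - x)).const_add x
  have h2 := (hd.hasFDerivAt.comp_hasDerivAt t hg).deriv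
  change ‖deriv (f ∘ fun t : ℝ => x + t • (y - x)) t‖ₑ ≤ _
  rw [h2, ← ofReal_norm, ← ENNReal.ofReal_mul (norm_nonneg _)]
  exact ENNReal.ofReal_le_ofReal (ContinuousLinearMap.le_opNorm _ _)

lemma wp_grad_meas {n : ℕ} {Ω : Set (EuclideanSpace ℝ (Fin n))} (hΩo : IsOpen Ω)
    (hΩc : Convex ℝ Ω) (hΩne : Ω.Nonempty)
    {f : EuclideanSpace ℝ (Fin n) → ℝ} (hf : ContDiffOn ℝ 1 f (closure Ω)) :
    ContinuousOn (fun z => ‖fderivWithin ℝ f (closure Ω) z‖) (closure Ω) := by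
  have hu : UniqueDiffOn ℝ (closure Ω) := uniqueDiffOn_convex hΩc.closure
    (hΩne.mono (interior_maximal subset_closure hΩo))
  exact (hf.continuousOn_fderivWithin hu le_rfl).norm

lemma wp_repr (n : ℕ) (hn : 1 ≤ n) (Ω : Set (EuclideanSpace ℝ (Fin n)))
    (hΩo : IsOpen Ω) (hΩc : Convex ℝ Ω) (hΩb : Bornology.IsBounded Ω) (hΩne : Ω.Nonempty) :
    ∃ K : ℝ, 0 ≤ K ∧ ∀ f : EuclideanSpace ℝ (Fin n) → ℝ, ContDiffOn ℝ 1 f (closure Ω) →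
      ∀ x ∈ Ω, ENNReal.ofReal |f x - ⨍ y in Ω, f y ∂volume| ≤ ENNReal.ofReal K *
        ∫⁻ z, Ω.indicator (fun z => ENNReal.ofReal ‖fderivWithin ℝ f (closure Ω) z‖) z *
          ENNReal.ofReal (‖x - z‖ ^ (1 - n : ℝ)) := by
  obtain ⟨D0, hD0⟩ := hΩb.exists_norm_le
  set D := 2 * |D0| + 1 with hDdef
  have hD : 0 < D := by positivity
  have hΩD : ∀ x ∈ Ω, ∀ y ∈ Ω, ‖y - x‖ ≤ D := by
    intro x hx y hy
    have := norm_sub_le y x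
    have := hD0 x hx
    have := hD0 y hy
    have := le_abs_self D0
    linarith
  have hvol0 : volume Ω ≠ 0 := (hΩo.measure_pos volume hΩne).ne'
  have hvolt : volume Ω ≠ ⊤ := hΩb.measure_lt_top.ne
  have hvr : 0 < volume.real Ω := ENNReal.toReal_pos hvol0 hvolt
  refine ⟨(volume.real Ω)⁻¹ * (D ^ n / n), by positivity, ?_⟩
  intro f hf x hx
  have hfi : IntegrableOn f Ω := by
    have : IntegrableOn f (closure Ω) := hf.continuousOn.integrableOn_compact hΩb.isCompact_closure
    exact this.mono_set subset_closure
  have hfin : IsFiniteMeasure (volume.restrict Ω) := ⟨by simpa using hvolt.lt_top⟩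
  have e1 : f x - ⨍ y in Ω, f y ∂volume = (volume.real Ω)⁻¹ * ∫ y in Ω, (f x - f y) := by
    rw [setAverage_eq, integral_sub (integrable_const _) hfi, setIntegral_const, smul_eq_mul, smul_eq_mul]
    field_simp
  have hwm : Measurable (Ω.indicator (fun z => ENNReal.ofReal ‖fderivWithin ℝ f (closure Ω) z‖)) := by
    have hc := (wp_grad_meas hΩo hΩc hΩne hf).mono subset_closure
    have hc2 : ContinuousOn (fun z => ENNReal.ofReal ‖fderivWithin ℝ f (closure Ω) z‖) Ω :=
      ENNReal.continuous_ofReal.comp_continuousOn hc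
    classical
    rw [← Set.piecewise_eq_indicator]
    exact hc2.measurable_piecewise continuousOn_const hΩo.measurableSet
  rw [e1, abs_mul, abs_of_pos (inv_pos.2 hvr), ENNReal.ofReal_mul (by positivity),
    ENNReal.ofReal_mul (by positivity), mul_assoc]
  gcongr
  rw [← Real.norm_eq_abs, ofReal_norm]
  calc _ ≤ ∫⁻ y in Ω, ‖f x - f y‖ₑ := enorm_integral_le_lintegral_enorm _
    _ ≤ ∫⁻ y in Ω, ∫⁻ t in {t : ℝ | 0 < t ∧ t ≤ 1},
      Ω.indicator (fun z => ENNReal.ofReal ‖fderivWithin ℝ f (closure Ω) z‖) (x + t • (y - x)) *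
        ENNReal.ofReal ‖y - x‖ :=
        setLIntegral_mono' hΩo.measurableSet fun y hy => wp_path hΩo hΩc hf hx hy
    _ ≤ ∫⁻ y in {y | ‖y - x‖ ≤ D}, ∫⁻ t in {t : ℝ | 0 < t ∧ t ≤ 1},
      Ω.indicator (fun z => ENNReal.ofReal ‖fderivWithin ℝ f (closure Ω) z‖) (x + t • (y - x)) *
        ENNReal.ofReal ‖y - x‖ := lintegral_mono_set fun y hy => hΩD x hx y hy
    _ ≤ _ := wp_repr_core n hn D hD _ hwm x

lemma wp_young (n : ℕ) (hn : 1 ≤ n) (R : ℝ) (hR : 0 < R) (r s c : ℝ) (hrs : r.HolderConjugate s)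
    (hc : -(n : ℝ) < c * s) :
    ∃ C : ℝ, 0 ≤ C ∧ ∀ h : EuclideanSpace ℝ (Fin n) → ℝ, (∀ x, 0 ≤ h x) → Measurable h →
      (∀ x, R < ‖x‖ → h x = 0) → ∫⁻ x, ENNReal.ofReal (h x ^ r) ≤ 1 →
      ∫⁻ x, ENNReal.ofReal (h x * ‖x‖ ^ c) ≤ ENNReal.ofReal C := by
  obtain ⟨C, hC, H⟩ := wp_near n hn (c * s) hc
  refine ⟨1 + C * R ^ (c * s + n), by positivity, ?_⟩
  intro h hh hhm hsupp hh1
  have H0 := H 0 R hR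
  simp only [sub_zero] at H0
  have hB : MeasurableSet {x : EuclideanSpace ℝ (Fin n) | ‖x‖ ≤ R} :=
    measurableSet_le (by fun_prop) (by fun_prop)
  calc _ ≤ ∫⁻ x, (ENNReal.ofReal (h x ^ r) +
        {x : EuclideanSpace ℝ (Fin n) | ‖x‖ ≤ R}.indicator (fun x => ENNReal.ofReal (‖x‖ ^ (c * s))) x) := by
        refine lintegral_mono fun x => ?_
        by_cases hx : ‖x‖ ≤ R
        · rw [Set.indicator_of_mem (by exact hx)]
          have hhx := hh x
          rw [← ENNReal.ofReal_add (by positivity) (by positivity)]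
          apply ENNReal.ofReal_le_ofReal
          have y1 := Real.young_inequality_of_nonneg hhx (b := ‖x‖ ^ c) (by positivity) hrs
          have d1 : h x ^ r / r ≤ h x ^ r := div_le_self (by positivity) hrs.lt.le
          have d2 : (‖x‖ ^ c) ^ s / s ≤ (‖x‖ ^ c) ^ s := div_le_self (by positivity) hrs.symm.lt.le
          rw [Real.rpow_mul (norm_nonneg x)]
          linarith
        · rw [hsupp x (not_le.1 hx)]
          simp
    _ = (∫⁻ x, ENNReal.ofReal (h x ^ r)) +
        ∫⁻ x in {x : EuclideanSpace ℝ (Fin n) | ‖x‖ ≤ R}, ENNReal.ofReal (‖x‖ ^ (c * s)) := by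
        rw [lintegral_add_left (by fun_prop), lintegral_indicator hB]
    _ ≤ 1 + ENNReal.ofReal (C * R ^ (c * s + n)) := by gcongr
    _ = _ := by rw [ENNReal.ofReal_add zero_le_one (by positivity), ENNReal.ofReal_one]

lemma wp_bilin (n : ℕ) (hn : 1 ≤ n) (R : ℝ) (hR : 0 < R) (p q r a b : ℝ) (hp : 1 < p)
    (hpq : p ≤ q) (hqr : q.HolderConjugate r)
    (haq : -(n : ℝ) / q < a) (hab : a ≤ b) (hb : b < n * (1 - 1 / p))
    (hbal : n * (1 / p - 1 / q) ≤ 1 + a - b) :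
    ∃ C : ℝ, 0 ≤ C ∧ ∀ h g : EuclideanSpace ℝ (Fin n) → ℝ, (∀ x, 0 ≤ h x) → (∀ x, 0 ≤ g x) →
      Measurable h → Measurable g → (∀ x, R < ‖x‖ → h x = 0) → (∀ x, R < ‖x‖ → g x = 0) →
      ∫⁻ x, ENNReal.ofReal (h x ^ r) ≤ 1 → ∫⁻ x, ENNReal.ofReal (g x ^ p) ≤ 1 →
      ∫⁻ x, ∫⁻ y, ENNReal.ofReal (h x * (‖x‖ ^ a * ‖x - y‖ ^ (1 - n : ℝ) * ‖y‖ ^ (-b)) * g y) ≤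
        ENNReal.ofReal C := by
  have hp0 : 0 < p := by linarith
  have hq0 : 0 < q := by linarith
  have hr1 := hqr.symm.lt
  have hrq : 1 / r = 1 - 1 / q := by
    have := hqr.inv_add_inv_eq_one
    rw [one_div, one_div]; linarith
  have hpq' : 1 / q ≤ 1 / p := one_div_le_one_div_of_le hp0 hpq
  rcases hn.eq_or_lt with h1 | h1
  · -- dimension one
    have hn1 : (n : ℝ) = 1 := by rw [← h1]; norm_num
    obtain ⟨C1, hC1, H1⟩ := wp_young n hn R hR r q a hqr.symm (by
      rwa [div_lt_iff₀ hq0] at haq)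
    have hpc := Real.HolderConjugate.conjExponent hp
    obtain ⟨C2, hC2, H2⟩ := wp_young n hn R hR p p.conjExponent (-b) hpc (by
      have h2 := hpc.symm.pos
      have h3 := hpc.inv_add_inv_eq_one
      have h4 : 1 - 1 / p = p.conjExponent⁻¹ := by rw [one_div]; linarith
      rw [h4, ← div_eq_mul_inv, lt_div_iff₀ h2] at hb
      linarith)
    refine ⟨C1 * C2, by positivity, ?_⟩
    intro h g hh hg hhm hgm hhs hgs hh1 hg1
    have e : ∀ x y : EuclideanSpace ℝ (Fin n),
        ENNReal.ofReal (h x * (‖x‖ ^ a * ‖x - y‖ ^ (1 - n : ℝ) * ‖y‖ ^ (-b)) * g y) =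
        ENNReal.ofReal (h x * ‖x‖ ^ a) * ENNReal.ofReal (g y * ‖y‖ ^ (-b)) := by
      intro x y
      have hhx := hh x
      rw [← ENNReal.ofReal_mul (by positivity), hn1, sub_self, Real.rpow_zero]
      congr 1
      ring
    simp_rw [e, lintegral_const_mul' _ _ ENNReal.ofReal_ne_top]
    rw [lintegral_mul_const _ (by fun_prop), ENNReal.ofReal_mul hC1]
    exact mul_le_mul' (H1 h hh hhm hhs hh1) (H2 g hg hgm hgs hg1)
  · have hn2 : (2:ℝ) ≤ n := by exact_mod_cast h1
    set θ := 1 / p - 1 / q with hθ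
    set ρ1 := n * (1 - 1 / p) - b with hρ1
    set ρ2 := a + n * (1 / q) with hρ2
    set δ := 1 + a - b - n * θ with hδ
    have hposone : 0 < ρ1 := by linarith
    have hpostwo : 0 < ρ2 := by
      have : -(n : ℝ) / q = - (n * (1 / q)) := by ring
      linarith
    have hδ0 : 0 ≤ δ := by linarith
    have hsum : ρ1 + ρ2 = n - 1 + δ := by rw [hρ1, hρ2, hδ, hθ]; ring
    set l := δ / (ρ1 + ρ2) with hl
    have hl0 : 0 ≤ l := by positivity
    have hl1 : l < 1 := by
      rw [hl, div_lt_one (by linarith)]; linarith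
    have hle : l * ρ1 + l * ρ2 = δ := by
      rw [← mul_add, hl]; field_simp
    have k1 : l * ρ1 < ρ1 := by nlinarith
    have k2 : l * ρ2 < ρ2 := by nlinarith
    have k3 : 0 ≤ l * ρ1 := by positivity
    have k4 : 0 ≤ l * ρ2 := by positivity
    have hnθ : 0 ≤ n * θ := by
      have : 0 ≤ θ := by linarith
      positivity
    set a' := a - l * ρ2 with ha'
    set b' := b + l * ρ1 with hb'
    obtain ⟨C, hC, H⟩ := wp_stein_weiss n hn p r a' b' hp hr1 (by rw [hrq]; linarith)
      (by linarith) (by linarith) (by rw [hrq]; ring_nf; ring_nf at hρ2 k2; linarith)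
      (by rw [hrq, show 1 / p + (1 - 1 / q) - 1 = θ by rw [hθ]; ring]; linarith)
    refine ⟨R ^ (a - a') * R ^ (b' - b) * C, by positivity, ?_⟩
    intro h g hh hg hhm hgm hhs hgs hh1 hg1
    have M := wp_mono (S := Set.univ) (S' := Set.univ) (c := R ^ (a - a') * R ^ (b' - b))
      (F := fun z => h z.1 * (‖z.1‖ ^ a * ‖z.1 - z.2‖ ^ (1 - n : ℝ) * ‖z.2‖ ^ (-b)) * g z.2)
      (F' := fun z => h z.1 * (‖z.1‖ ^ a' * ‖z.1 - z.2‖ ^ (1 - n : ℝ) * ‖z.2‖ ^ (-b')) * g z.2)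
      MeasurableSet.univ le_rfl (by positivity) ?_ (by simpa using H h g hh hg hhm hgm hh1 hg1)
    · simpa using M
    filter_upwards [wp_ae_ne n hn] with x hx
    filter_upwards [wp_ae_ne n hn] with y hy _
    have hX : 0 < ‖x‖ := norm_pos_iff.2 hx
    have hY : 0 < ‖y‖ := norm_pos_iff.2 hy
    have hhx := hh x
    have hgy := hg y
    change h x * (‖x‖ ^ a * ‖x - y‖ ^ (1 - n : ℝ) * ‖y‖ ^ (-b)) * g y ≤
      R ^ (a - a') * R ^ (b' - b) * (h x * (‖x‖ ^ a' * ‖x - y‖ ^ (1 - n : ℝ) * ‖y‖ ^ (-b')) * g y)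
    by_cases hxR : ‖x‖ ≤ R
    swap
    · rw [hhs x (not_le.1 hxR)]; simp
    by_cases hyR : ‖y‖ ≤ R
    swap
    · rw [hgs y (not_le.1 hyR)]; simp
    have c1 : ‖x‖ ^ a ≤ R ^ (a - a') * ‖x‖ ^ a' := by
      calc ‖x‖ ^ a = ‖x‖ ^ (a - a') * ‖x‖ ^ a' := by rw [← Real.rpow_add hX]; congr 1; ring
        _ ≤ _ := by
          gcongr
          linarith
    have c2 : ‖y‖ ^ (-b) ≤ R ^ (b' - b) * ‖y‖ ^ (-b') := by
      calc ‖y‖ ^ (-b) = ‖y‖ ^ (b' - b) * ‖y‖ ^ (-b') := by rw [← Real.rpow_add hY]; congr 1; ring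
        _ ≤ _ := by
          gcongr
          linarith
    calc _ ≤ h x * ((R ^ (a - a') * ‖x‖ ^ a') * ‖x - y‖ ^ (1 - n : ℝ) * (R ^ (b' - b) * ‖y‖ ^ (-b'))) * g y := by
          gcongr
      _ = _ := by ring

lemma wp_dual (n : ℕ) (R : ℝ) (p q r a b C K : ℝ) (hp : 1 < p) (hqr : q.HolderConjugate r)
    (hC : 0 ≤ C) (hK : 0 ≤ K)
    (H : ∀ h g : EuclideanSpace ℝ (Fin n) → ℝ, (∀ x, 0 ≤ h x) → (∀ x, 0 ≤ g x) →
      Measurable h → Measurable g → (∀ x, R < ‖x‖ → h x = 0) → (∀ x, R < ‖x‖ → g x = 0) →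
      ∫⁻ x, ENNReal.ofReal (h x ^ r) ≤ 1 → ∫⁻ x, ENNReal.ofReal (g x ^ p) ≤ 1 →
      ∫⁻ x, ∫⁻ y, ENNReal.ofReal (h x * (‖x‖ ^ a * ‖x - y‖ ^ (1 - n : ℝ) * ‖y‖ ^ (-b)) * g y) ≤
        ENNReal.ofReal C)
    (u g : EuclideanSpace ℝ (Fin n) → ℝ) (hu : ∀ x, 0 ≤ u x) (hg : ∀ x, 0 ≤ g x)
    (hum : Measurable u) (hgm : Measurable g)
    (hus : ∀ x, R < ‖x‖ → u x = 0) (hgs : ∀ x, R < ‖x‖ → g x = 0)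
    (A σ : ℝ) (hA0 : 0 ≤ A) (hA : ∫⁻ x, ENNReal.ofReal (u x ^ q) = ENNReal.ofReal A)
    (hσ : 0 < σ) (hG : ∫⁻ x, ENNReal.ofReal (g x ^ p) ≤ ENNReal.ofReal (σ ^ p))
    (hug : ∀ᵐ x, ENNReal.ofReal (u x) ≤ ENNReal.ofReal K * ∫⁻ y,
      ENNReal.ofReal ((‖x‖ ^ a * ‖x - y‖ ^ (1 - n : ℝ) * ‖y‖ ^ (-b)) * g y)) :
    A ^ (1 / q) ≤ K * C * σ := by
  have hq1 := hqr.lt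
  have hq0 := hqr.pos
  have hr0 := hqr.symm.pos
  rcases hA0.eq_or_lt with h0 | hAp
  · rw [← h0, Real.zero_rpow (by positivity)]
    positivity
  have hrq : 1 / q + 1 / r = 1 := by
    have := hqr.inv_add_inv_eq_one
    rw [one_div, one_div]; linarith
  have hqm : (q - 1) * r = q := hqr.sub_one_mul_conj
  set B := A ^ (1 / r) with hB
  have hBp : 0 < B := by positivity
  have hBr : B ^ r = A := by
    rw [hB, ← Real.rpow_mul hA0, one_div, inv_mul_cancel₀ hr0.ne', Real.rpow_one]
  have main := H (fun x => u x ^ (q - 1) / B) (fun x => g x / σ)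
    (fun x => by have := hu x; positivity) (fun x => by have := hg x; positivity)
    (by fun_prop) (by fun_prop)
    (fun x hx => by
      change u x ^ (q - 1) / B = 0
      rw [hus x hx, Real.zero_rpow (by linarith), zero_div])
    (fun x hx => by
      change g x / σ = 0
      rw [hgs x hx, zero_div])
    (by
      have e : ∀ x, ENNReal.ofReal ((u x ^ (q - 1) / B) ^ r) = ENNReal.ofReal A⁻¹ * ENNReal.ofReal (u x ^ q) := by
        intro x
        have hux := hu x
        rw [← ENNReal.ofReal_mul (by positivity), Real.div_rpow (by positivity) hBp.le, hBr,
          ← Real.rpow_mul hux, hqm, div_eq_inv_mul]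
      simp_rw [e]
      rw [lintegral_const_mul' _ _ ENNReal.ofReal_ne_top, hA, ← ENNReal.ofReal_mul (by positivity),
        inv_mul_cancel₀ hAp.ne', ENNReal.ofReal_one])
    (by
      have e : ∀ x, ENNReal.ofReal ((g x / σ) ^ p) = ENNReal.ofReal (σ ^ p)⁻¹ * ENNReal.ofReal (g x ^ p) := by
        intro x
        have hgx := hg x
        rw [← ENNReal.ofReal_mul (by positivity), Real.div_rpow (by positivity) hσ.le, div_eq_inv_mul]
      simp_rw [e]
      rw [lintegral_const_mul' _ _ ENNReal.ofReal_ne_top]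
      refine (mul_le_mul_right hG _).trans (le_of_eq ?_)
      rw [← ENNReal.ofReal_mul (by positivity), inv_mul_cancel₀ (by positivity), ENNReal.ofReal_one])
  have hle : ENNReal.ofReal A ≤ ENNReal.ofReal (B * σ * K * C) := by
    calc ENNReal.ofReal A = ∫⁻ x, ENNReal.ofReal (u x ^ q) := hA.symm
      _ = ∫⁻ x, ENNReal.ofReal (u x ^ (q - 1)) * ENNReal.ofReal (u x) := by
          refine lintegral_congr fun x => ?_
          have hux := hu x
          rw [← ENNReal.ofReal_mul (by positivity)]
          congr 1
          rcases hux.eq_or_lt with h | h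
          · rw [← h, Real.zero_rpow hq0.ne', mul_zero]
          · rw [Real.rpow_sub_one h.ne']; field_simp
      _ ≤ ∫⁻ x, ENNReal.ofReal (u x ^ (q - 1)) * (ENNReal.ofReal K * ∫⁻ y,
          ENNReal.ofReal ((‖x‖ ^ a * ‖x - y‖ ^ (1 - n : ℝ) * ‖y‖ ^ (-b)) * g y)) := by
          refine lintegral_mono_ae ?_
          filter_upwards [hug] with x hx
          gcongr
      _ = ∫⁻ x, ENNReal.ofReal (B * σ * K) * ∫⁻ y, ENNReal.ofReal (u x ^ (q - 1) / B *
          (‖x‖ ^ a * ‖x - y‖ ^ (1 - n : ℝ) * ‖y‖ ^ (-b)) * (g y / σ)) := by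
          refine lintegral_congr fun x => ?_
          have hux := hu x
          rw [← mul_assoc, ← ENNReal.ofReal_mul (by positivity),
            ← lintegral_const_mul' _ _ ENNReal.ofReal_ne_top,
            ← lintegral_const_mul' _ _ ENNReal.ofReal_ne_top]
          refine lintegral_congr fun y => ?_
          rw [← ENNReal.ofReal_mul (by positivity), ← ENNReal.ofReal_mul (by positivity)]
          congr 1
          field_simp
      _ = ENNReal.ofReal (B * σ * K) * ∫⁻ x, ∫⁻ y, ENNReal.ofReal (u x ^ (q - 1) / B *
          (‖x‖ ^ a * ‖x - y‖ ^ (1 - n : ℝ) * ‖y‖ ^ (-b)) * (g y / σ)) :=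
          lintegral_const_mul' _ _ ENNReal.ofReal_ne_top
      _ ≤ ENNReal.ofReal (B * σ * K) * ENNReal.ofReal C := by gcongr
      _ = _ := (ENNReal.ofReal_mul (by positivity)).symm
  rw [ENNReal.ofReal_le_ofReal_iff (by positivity)] at hle
  have hsplit : A = A ^ (1 / q) * B := by
    rw [hB, ← Real.rpow_add hAp, hrq, Real.rpow_one]
  have : A ^ (1 / q) * B ≤ (K * C * σ) * B := by
    rw [← hsplit]; linarith
  exact le_of_mul_le_mul_right this hBp

lemma wp_fin (n : ℕ) (hn : 1 ≤ n) (Ω : Set (EuclideanSpace ℝ (Fin n)))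
    (hΩo : IsOpen Ω) (hΩb : Bornology.IsBounded Ω)
    (φ : EuclideanSpace ℝ (Fin n) → ℝ) (hφ : ContinuousOn φ (closure Ω)) (hφ0 : ∀ x, 0 ≤ φ x)
    (s q : ℝ) (hq : 0 < q) (hs : -(n : ℝ) < s * q) :
    Measurable (Ω.indicator (fun x => ‖x‖ ^ s * φ x)) ∧
    ∫⁻ x, ENNReal.ofReal ((Ω.indicator (fun x => ‖x‖ ^ s * φ x) x) ^ q) =
      ENNReal.ofReal (∫ x in Ω, (‖x‖ ^ s * φ x) ^ q) := by
  have hΩm := hΩo.measurableSet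
  have hφm : Measurable (Ω.indicator φ) := by
    classical
    rw [← Set.piecewise_eq_indicator]
    exact (hφ.mono subset_closure).measurable_piecewise continuousOn_const hΩm
  have hm : Measurable (Ω.indicator (fun x => ‖x‖ ^ s * φ x)) := by
    have : Ω.indicator (fun x => ‖x‖ ^ s * φ x) = fun x => ‖x‖ ^ s * Ω.indicator φ x := by
      ext x
      by_cases hx : x ∈ Ω <;> simp [hx]
    rw [this]
    fun_prop
  refine ⟨hm, ?_⟩
  have e1 : ∫⁻ x, ENNReal.ofReal ((Ω.indicator (fun x => ‖x‖ ^ s * φ x) x) ^ q) =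
      ∫⁻ x in Ω, ENNReal.ofReal ((‖x‖ ^ s * φ x) ^ q) := by
    rw [← lintegral_indicator hΩm]
    refine lintegral_congr fun x => ?_
    by_cases hx : x ∈ Ω
    · simp [hx]
    · simp [hx, Real.zero_rpow hq.ne']
  have e2 : ∫ x in Ω, (‖x‖ ^ s * φ x) ^ q = ∫ x, (Ω.indicator (fun x => ‖x‖ ^ s * φ x) x) ^ q := by
    rw [← integral_indicator hΩm]
    congr 1
    ext x
    by_cases hx : x ∈ Ω
    · simp [hx]
    · simp [hx, Real.zero_rpow hq.ne']
  have hnn : ∀ x, 0 ≤ (Ω.indicator (fun x => ‖x‖ ^ s * φ x) x) ^ q := by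
    intro x
    have : 0 ≤ Ω.indicator (fun x => ‖x‖ ^ s * φ x) x :=
      Set.indicator_nonneg (fun x _ => by have := hφ0 x; positivity) x
    positivity
  rw [e2, ofReal_integral_eq_lintegral_ofReal _ (Filter.Eventually.of_forall hnn)]
  refine ⟨(by fun_prop : Measurable _).aestronglyMeasurable, ?_⟩
  rw [hasFiniteIntegral_iff_ofReal (Filter.Eventually.of_forall hnn), e1]
  obtain ⟨M, hM⟩ := hΩb.isCompact_closure.exists_bound_of_continuousOn hφ
  obtain ⟨R0, hR0⟩ := hΩb.exists_norm_le
  obtain ⟨C, hC, H⟩ := wp_near n hn (s * q) hs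
  have H0 := H 0 (|R0| + 1) (by positivity)
  simp only [sub_zero] at H0
  calc _ ≤ ∫⁻ x in Ω, ENNReal.ofReal (|M| ^ q) * ENNReal.ofReal (‖x‖ ^ (s * q)) := by
        refine setLIntegral_mono' hΩm fun x hx => ?_
        rw [← ENNReal.ofReal_mul (by positivity)]
        apply ENNReal.ofReal_le_ofReal
        have h0 := hφ0 x
        rw [Real.mul_rpow (by positivity) h0, ← Real.rpow_mul (norm_nonneg x), mul_comm]
        have := hM x (subset_closure hx)
        have h2 : φ x ≤ |M| := (le_abs_self _).trans (this.trans (le_abs_self M))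
        gcongr
    _ ≤ ∫⁻ x in {x | ‖x‖ ≤ |R0| + 1}, ENNReal.ofReal (|M| ^ q) * ENNReal.ofReal (‖x‖ ^ (s * q)) := by
        apply lintegral_mono_set
        intro x hx
        have := hR0 x hx
        have := le_abs_self R0
        change ‖x‖ ≤ |R0| + 1
        linarith
    _ = ENNReal.ofReal (|M| ^ q) * ∫⁻ x in {x | ‖x‖ ≤ |R0| + 1}, ENNReal.ofReal (‖x‖ ^ (s * q)) :=
        lintegral_const_mul' _ _ ENNReal.ofReal_ne_top
    _ ≤ _ := mul_le_mul_right H0 _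
    _ < ⊤ := ENNReal.mul_lt_top ENNReal.ofReal_lt_top ENNReal.ofReal_lt_top

theorem weighted_poincare_power_weights
    (n : ℕ) (hn : 1 ≤ n) (p q a b : ℝ)
    (hp : 1 < p) (hpq : p ≤ q)
    (haq : -(n : ℝ) / q < a) (hab : a ≤ b) (hb : b < (n : ℝ) / (p / (p - 1)))
    (hbal : 1 / p - 1 / q ≤ 1 / (n : ℝ) + (a - b) / n)
    (Ω : Set (EuclideanSpace ℝ (Fin n)))
    (hΩo : IsOpen Ω) (hΩc : Convex ℝ Ω) (hΩb : Bornology.IsBounded Ω)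
    (hΩne : Ω.Nonempty) :
    ∃ C : ℝ, 0 < C ∧
      ∀ f : EuclideanSpace ℝ (Fin n) → ℝ, ContDiffOn ℝ (⊤ : ℕ∞) f (closure Ω) →
        (∫ x in Ω, (‖x‖ ^ a * |f x - ⨍ y in Ω, f y ∂volume|) ^ q) ^ (1 / q) ≤
          C * (∫ x in Ω, (‖x‖ ^ b * ‖fderivWithin ℝ f (closure Ω) x‖) ^ p) ^ (1 / p) := by
  have hn0 : (0:ℝ) < n := by exact_mod_cast hn
  have hp0 : 0 < p := by linarith
  have hq1 : 1 < q := by linarith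
  have hq0 : 0 < q := by linarith
  have hqr := Real.HolderConjugate.conjExponent hq1
  obtain ⟨R0, hR0⟩ := hΩb.exists_norm_le
  set R := |R0| + 1 with hRdef
  have hR : 0 < R := by positivity
  have hΩR : ∀ x, R < ‖x‖ → x ∉ Ω := by
    intro x hx hxΩ
    have := hR0 x hxΩ
    have := le_abs_self R0
    linarith
  have hb' : b < n * (1 - 1 / p) := by
    have : (n : ℝ) / (p / (p - 1)) = n * (1 - 1 / p) := by
      have : p - 1 ≠ 0 := by linarith
      field_simp
    rwa [this] at hb
  have hbal' : n * (1 / p - 1 / q) ≤ 1 + a - b := by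
    have h1 := mul_le_mul_of_nonneg_left hbal hn0.le
    have h2 : (n : ℝ) * (1 / (n : ℝ) + (a - b) / n) = 1 + a - b := by
      field_simp
      ring
    linarith
  obtain ⟨C, hC, H⟩ := wp_bilin n hn R hR p q q.conjExponent a b hp hpq hqr haq hab hb' hbal'
  obtain ⟨K, hK, HK⟩ := wp_repr n hn Ω hΩo hΩc hΩb hΩne
  have haq' : -(n : ℝ) < a * q := by rwa [div_lt_iff₀ hq0] at haq
  have hbp : -(n : ℝ) < b * p := by
    have h1 : -(n : ℝ) / p ≤ -(n : ℝ) / q := by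
      rw [neg_div, neg_div]
      have : (n : ℝ) / q ≤ n / p := by gcongr
      linarith
    rw [← div_lt_iff₀ hp0]
    linarith
  refine ⟨K * C + 1, by positivity, ?_⟩
  intro f hf'
  have hf : ContDiffOn ℝ 1 f (closure Ω) := hf'.of_le (by exact_mod_cast le_top)
  set m := ⨍ y in Ω, f y ∂volume with hm
  have hcu : ContinuousOn (fun x => |f x - m|) (closure Ω) :=
    (hf.continuousOn.sub continuousOn_const).abs
  obtain ⟨hum, huA⟩ := wp_fin n hn Ω hΩo hΩb _ hcu (fun x => abs_nonneg _) a q hq0 haq'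
  obtain ⟨hgm, hgG⟩ := wp_fin n hn Ω hΩo hΩb _ (wp_grad_meas hΩo hΩc hΩne hf)
    (fun x => norm_nonneg _) b p hp0 hbp
  set A := ∫ x in Ω, (‖x‖ ^ a * |f x - m|) ^ q with hA
  set G := ∫ x in Ω, (‖x‖ ^ b * ‖fderivWithin ℝ f (closure Ω) x‖) ^ p with hG
  have hA0 : 0 ≤ A := integral_nonneg fun x => by positivity
  have hG0 : 0 ≤ G := integral_nonneg fun x => by positivity
  have key : ∀ σ : ℝ, G ^ (1 / p) < σ → A ^ (1 / q) ≤ K * C * σ := by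
    intro σ hσ
    have hGp : 0 ≤ G ^ (1 / p) := by positivity
    have hσ0 : 0 < σ := lt_of_le_of_lt hGp hσ
    refine wp_dual n R p q q.conjExponent a b C K hp hqr hC hK H
      (Ω.indicator (fun x => ‖x‖ ^ a * |f x - m|))
      (Ω.indicator (fun x => ‖x‖ ^ b * ‖fderivWithin ℝ f (closure Ω) x‖))
      (Set.indicator_nonneg (fun x _ => by positivity))
      (Set.indicator_nonneg (fun x _ => by positivity)) hum hgm
      (fun x hx => Set.indicator_of_notMem (hΩR x hx) _)
      (fun x hx => Set.indicator_of_notMem (hΩR x hx) _) A σ hA0 huA hσ0 ?_ ?_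
    · rw [hgG]
      apply ENNReal.ofReal_le_ofReal
      calc G = (G ^ (1 / p)) ^ p := by
            rw [← Real.rpow_mul hG0, one_div, inv_mul_cancel₀ hp0.ne', Real.rpow_one]
        _ ≤ σ ^ p := by gcongr
    · filter_upwards with x
      by_cases hx : x ∈ Ω
      swap
      · rw [Set.indicator_of_notMem hx]; simp
      rw [Set.indicator_of_mem hx, ENNReal.ofReal_mul (by positivity)]
      refine (mul_le_mul_right (HK f hf x hx) _).trans ?_
      rw [mul_left_comm]
      gcongr
      rw [← lintegral_const_mul' _ _ ENNReal.ofReal_ne_top]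
      refine lintegral_mono_ae ?_
      filter_upwards [wp_ae_ne n hn] with z hz
      have hZ : 0 < ‖z‖ := norm_pos_iff.2 hz
      by_cases hzΩ : z ∈ Ω
      swap
      · rw [Set.indicator_of_notMem hzΩ]; simp
      rw [Set.indicator_of_mem hzΩ, Set.indicator_of_mem hzΩ, ← ENNReal.ofReal_mul (by positivity),
        ← ENNReal.ofReal_mul (by positivity)]
      apply ENNReal.ofReal_le_ofReal
      have e : ‖z‖ ^ (-b) * ‖z‖ ^ b = 1 := by
        rw [← Real.rpow_add hZ, neg_add_cancel, Real.rpow_zero]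
      apply le_of_eq
      linear_combination (-(‖x‖ ^ a * ‖x - z‖ ^ (1 - n : ℝ) * ‖fderivWithin ℝ f (closure Ω) z‖)) * e
  have hlim : A ^ (1 / q) ≤ K * C * G ^ (1 / p) := by
    refine ge_of_tendsto (x := nhdsWithin (G ^ (1 / p)) (Set.Ioi (G ^ (1 / p))))
      (f := fun σ => K * C * σ) ?_ ?_
    · exact ((continuous_const.mul continuous_id).tendsto _).mono_left nhdsWithin_le_nhds
    · filter_upwards [self_mem_nhdsWithin] with σ hσ using key σ hσ
  have hGp : 0 ≤ G ^ (1 / p) := by positivity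
  linarith
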